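/- Let (X_A, μ) be a topologically mixing Markov subshift of finite type satisfying the Doeblin condition, with the left shift T nonsingular with respect to μ. For every admissible configuration (B_k(i_k), B'_k(j_k))_{k≥1}, with D_k = log( P_{i_k}(B'_k) P_{j_k}(B_k) / ( P_{i_k}(B_k) P_{j_k}(B'_k) ) ), the set 𝓛(D_k : k ≥ 1) of partial limits of (D_k) is contained in the ratio set e(𝓡_A) of the renormalization pseudo full-group. In particular, if this partial limits set contains a positive-length interval, or contains two numbers that are linearly independent over the rationals, then e(𝓡_A) = ℝ. -/

import Mathlib

/-!
Exchanging the word `B_k` found at `i_k` with the word `B'_k` found at `j_k` multiplies the weight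
of every cylinder covering both positions by `exp (D k)`. The exchange therefore has the constant
logarithmic Radon–Nikodym derivative `D k`, and likewise a constant one for each of the shifted
measures, which are Markov with shifted transition matrices. By the chain rule the exchange belongs
to the renormalization pseudo full-group as soon as these constants tend to `0` along the shifts.

They do, because consecutive transition matrices are asymptotically equal. The indicators of the
transitions from `s` to `t`, compensated by their conditional expectations, are bounded and
orthogonal in `L²(μ)`, so by Bessel's inequality their means under any probability measure
absolutely continuous with respect to `μ` tend to `0`. Under the measure shifted by `m`, the mean at
time `n` is `π (n + m) s * (P (n + m) s t - P n s t)`, where `π` is bounded below by the Doeblin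
condition and primitivity.

The same two conditions show that prescribing admissible words at distance at least `M` from a
window `[-N, N]` keeps a fixed proportion of every set depending only on that window. Approximating
Borel sets by such sets, one finds that partial limits of `D` are essential values.

The pseudo full-group being a groupoid, the ratio set is a closed subgroup of `ℝ`. A subgroup
containing an interval is open, hence all of `ℝ`, and a closed one containing two rationally
independent numbers is dense, hence all of `ℝ`.
-/

open MeasureTheory Filter Topology

namespace MarkovSFT

/-- The space of two-sided sequences over `S`. -/
abbrev Seq (S : Type*) := ℤ → S

/-- The shift by `n`: `(T^n x)_k = x_{k+n}`. -/
def shiftZ {S : Type*} (n : ℤ) (x : Seq S) : Seq S := fun k => x (k + n)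

/-- The left shift `T`. -/
def shiftMap {S : Type*} : Seq S → Seq S := shiftZ 1

/-- The subshift of finite type determined by the adjacency matrix `A`. -/
def SFT {S : Type*} (A : S → S → Bool) : Set (Seq S) :=
  {x | ∀ n : ℤ, A (x n) (x (n + 1)) = true}

/-- `A` is primitive: all entries of `A^M` are positive for some `M ≥ 1`
(expressed via the existence of admissible paths of length `M`). -/
def IsPrimitive {S : Type*} (A : S → S → Bool) : Prop :=
  ∃ M : ℕ, 1 ≤ M ∧ ∀ s t : S, ∃ u : ℕ → S,
    u 0 = s ∧ u M = t ∧ ∀ i < M, A (u i) (u (i + 1)) = true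

/-- A stochastic matrix over the finite state space `S`. -/
def IsStochastic {S : Type*} [Fintype S] (P : S → S → ℝ) : Prop :=
  (∀ s t, 0 ≤ P s t) ∧ ∀ s, ∑ t, P s t = 1

/-- The Doeblin condition for the family of transition matrices `P` relative to `A`. -/
def Doeblin {S : Type*} (A : S → S → Bool) (P : ℤ → S → S → ℝ) : Prop :=
  ∃ δ : ℝ, 0 < δ ∧ ∀ (n : ℤ) (s t : S), δ ≤ P n s t ↔ A s t = true

/-- `μ` is the Markov measure on the SFT `X_A` determined by the transition
matrices `(P n)` and coordinate distributions `(π n)`. -/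
structure IsMarkovMeasure {S : Type*} [Fintype S] [MeasurableSpace S]
    (μ : Measure (Seq S)) (A : S → S → Bool)
    (P : ℤ → S → S → ℝ) (π : ℤ → S → ℝ) : Prop where
  isProb : IsProbabilityMeasure μ
  stochastic : ∀ n, IsStochastic (P n)
  compat : ∀ (n : ℤ) (s t : S), A s t = false → P n s t = 0
  dist_nonneg : ∀ (n : ℤ) (s : S), 0 ≤ π n s
  dist_sum : ∀ n : ℤ, ∑ s, π n s = 1
  consistent : ∀ (n : ℤ) (t : S), ∑ s, π n s * P n s t = π (n + 1) t
  supp : μ (SFT A) = 1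
  cylinder : ∀ (k : ℤ) (m : ℕ) (w : Fin (m + 1) → S),
    μ {x | ∀ i : Fin (m + 1), x (k + 1 + ((i : ℕ) : ℤ)) = w i}
      = ENNReal.ofReal (π (k + 1) (w 0) *
          ∏ i : Fin m, P (k + 1 + ((i : ℕ) : ℤ)) (w i.castSucc) (w i.succ))

/-- The left shift is nonsingular with respect to `μ`:
`μ` and `μ ∘ T⁻¹` are mutually absolutely continuous. -/
def ShiftNonsingular {S : Type*} [Fintype S] [MeasurableSpace S]
    (μ : Measure (Seq S)) : Prop :=
  Measure.map (shiftMap (S := S)) μ ≪ μ ∧ μ ≪ Measure.map (shiftMap (S := S)) μ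

/-- The left shift is conservative with respect to `μ`. -/
def ShiftConservative {S : Type*} [Fintype S] [MeasurableSpace S]
    (μ : Measure (Seq S)) : Prop :=
  ∀ E : Set (Seq S), MeasurableSet E → 0 < μ E →
    ∃ n : ℕ, 1 ≤ n ∧ 0 < μ (E ∩ (shiftMap (S := S))^[n] ⁻¹' E)

/-- An element of the pseudo full-group `[[T]]` of the shift, together with
(a version of) the logarithm of its Radon–Nikodym derivative `log dμ∘V/dμ`. -/
structure PFG {S : Type*} [Fintype S] [MeasurableSpace S] (μ : Measure (Seq S)) where
  dom : Set (Seq S)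
  toFun : Seq S → Seq S
  logDeriv : Seq S → ℝ
  meas_dom : MeasurableSet dom
  meas_toFun : Measurable toFun
  meas_logDeriv : Measurable logDeriv
  injOn : Set.InjOn toFun dom
  orbit : ∀ᵐ x ∂μ.restrict dom, ∃ n : ℤ, toFun x = shiftZ n x
  deriv_spec : ∀ E : Set (Seq S), E ⊆ dom → MeasurableSet E →
    μ (toFun '' E) = ∫⁻ x in E, ENNReal.ofReal (Real.exp (logDeriv x)) ∂μ

/-- `r` is an essential value of (the Radon–Nikodym cocycle of) the shift on `(X, μ)`. -/
def IsEssentialValue {S : Type*} [Fintype S] [MeasurableSpace S]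
    (μ : Measure (Seq S)) (r : ℝ) : Prop :=
  ∀ E : Set (Seq S), MeasurableSet E → 0 < μ E → ∀ ε : ℝ, 0 < ε →
    ∃ g : PFG μ,
      0 < μ (E ∩ g.dom ∩ g.toFun ⁻¹' E ∩ {x | |g.logDeriv x - r| < ε})

end MarkovSFT
namespace MarkovSFT

/-- The weight `P_i(B) = P_i(b_1,b_2) ⋯ P_{i+ℓ-2}(b_{ℓ-1},b_ℓ)` of the block `B`
(of length `ℓ`, indexed from `0`) placed at coordinate `i`. -/
noncomputable def wordP {S : Type*} (P : ℤ → S → S → ℝ) (i : ℤ)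
    (B : ℕ → S) (ℓ : ℕ) : ℝ :=
  ∏ l ∈ Finset.range (ℓ - 1), P (i + (l : ℤ)) (B l) (B (l + 1))

/-- An element of the renormalization pseudo full-group `[[𝓡_A]]`: a nonsingular
measurable injection `V : dom → X_A`, moving a.e. point within its
finite-coordinate-change class, with log Radon–Nikodym derivative `logDeriv`,
such that a.e. on `dom` the ratio `(d(μ∘Tⁿ∘V)/dμ)(x) / (d(μ∘Tⁿ)/dμ)(x)`
(computed via the chain rule) tends to `1` as `|n| → ∞`. -/
structure RenormPFG {S : Type*} [Fintype S] [MeasurableSpace S]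
    (μ : Measure (Seq S)) where
  dom : Set (Seq S)
  toFun : Seq S → Seq S
  logDeriv : Seq S → ℝ
  meas_dom : MeasurableSet dom
  meas_toFun : Measurable toFun
  meas_logDeriv : Measurable logDeriv
  injOn : Set.InjOn toFun dom
  finite_diff : ∀ᵐ x ∂μ.restrict dom, {k : ℤ | toFun x k ≠ x k}.Finite
  deriv_spec : ∀ E : Set (Seq S), E ⊆ dom → MeasurableSet E →
    μ (toFun '' E) = ∫⁻ x in E, ENNReal.ofReal (Real.exp (logDeriv x)) ∂μ
  renorm : ∀ᵐ x ∂μ.restrict dom,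
    Tendsto (fun n : ℤ =>
        Measure.rnDeriv (Measure.map (shiftZ (-n)) μ) μ (toFun x)
            * ENNReal.ofReal (Real.exp (logDeriv x))
          / Measure.rnDeriv (Measure.map (shiftZ (-n)) μ) μ x)
      cofinite (𝓝 (1 : ENNReal))

/-- `r` is an essential value of the Radon–Nikodym cocycle of the
renormalization pseudo full-group `𝓡_A`. -/
def IsEssentialValueRenorm {S : Type*} [Fintype S] [MeasurableSpace S]
    (μ : Measure (Seq S)) (r : ℝ) : Prop :=
  ∀ E : Set (Seq S), MeasurableSet E → 0 < μ E → ∀ ε : ℝ, 0 < ε →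
    ∃ g : RenormPFG μ,
      0 < μ (E ∩ g.dom ∩ g.toFun ⁻¹' E ∩ {x | |g.logDeriv x - r| < ε})

end MarkovSFT
namespace MarkovSFT

/-- The set of partial limits (limit points) of a sequence. -/
def limitSet {α : Type*} [TopologicalSpace α] (v : ℕ → α) : Set α :=
  {a | ∃ φ : ℕ → ℕ, StrictMono φ ∧ Tendsto (v ∘ φ) atTop (𝓝 a)}

/-! ### Jacobians of partial injections -/

section Jacobian

open scoped ENNReal

variable {α : Type*} [MeasurableSpace α] {μ ν : Measure α} {V W : α → α} {D D' : Set α}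
  {w w' : α → ℝ≥0∞}

/-- `w` is a Jacobian on `D` of the map `V`, taken to be injective on `D`, with respect to `μ`:
a version of the Radon–Nikodym derivative `dμ∘V/dμ` there. -/
def HasJacobian (μ : Measure α) (V : α → α) (D : Set α) (w : α → ℝ≥0∞) : Prop :=
  ∀ E ⊆ D, MeasurableSet E → μ (V '' E) = ∫⁻ x in E, w x ∂μ

namespace HasJacobian

lemma mono (h : HasJacobian μ V D w) (hD : D' ⊆ D) : HasJacobian μ V D' w :=
  fun E hE => h E (hE.trans hD)

lemma restrict_image (h : HasJacobian μ V D w) (hV : Measurable V) (hD : MeasurableSet D) :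
    μ.restrict (V '' D) = ((μ.restrict D).withDensity w).map V := by
  ext B hB
  rw [Measure.restrict_apply hB, Set.inter_comm, ← Set.image_inter_preimage,
    h _ Set.inter_subset_left (hD.inter (hV hB)), Measure.map_apply hV hB,
    withDensity_apply _ (hV hB), Measure.restrict_restrict (hV hB), Set.inter_comm]

lemma setLIntegral_image (h : HasJacobian μ V D w) (hV : Measurable V) (hD : MeasurableSet D)
    (hw : Measurable w) {f : α → ℝ≥0∞} (hf : Measurable f) :
    ∫⁻ y in V '' D, f y ∂μ = ∫⁻ x in D, f (V x) * w x ∂μ := by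
  have hmul := lintegral_withDensity_eq_lintegral_mul (μ.restrict D) hw (hf.comp hV)
  simp only [Pi.mul_apply, Function.comp_apply] at hmul
  simp only [h.restrict_image hV hD, lintegral_map hf hV, hmul, mul_comm]

lemma ae_comp (h : HasJacobian μ V D w) (hV : Measurable V) (hD : MeasurableSet D)
    (hw : Measurable w) (hpos : ∀ x, w x ≠ 0) {p : α → Prop} (hp : ∀ᵐ y ∂μ, p y) :
    ∀ᵐ x ∂μ.restrict D, p (V x) := by
  have hac : μ.restrict D ≪ (μ.restrict D).withDensity w :=
    withDensity_absolutelyContinuous' hw.aemeasurable (.of_forall hpos)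
  have himage : ∀ᵐ y ∂((μ.restrict D).withDensity w).map V, p y :=
    h.restrict_image hV hD ▸ ae_restrict_of_ae hp
  exact hac.ae_le (ae_of_ae_map hV.aemeasurable himage)

lemma measure_image_pos_iff (h : HasJacobian μ V D w) (hw : Measurable w) (hpos : ∀ x, w x ≠ 0)
    (hD : MeasurableSet D) : 0 < μ (V '' D) ↔ 0 < μ D := by
  have hsupport : Function.support w = Set.univ := Set.eq_univ_of_forall hpos
  rw [h D subset_rfl hD, setLIntegral_pos_iff hw, hsupport, Set.univ_inter]

lemma rnDeriv_comp_mul [SigmaFinite μ] [ν.HaveLebesgueDecomposition μ]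
    (h : HasJacobian μ V D w) (h' : HasJacobian ν V D w') (hνμ : ν ≪ μ)
    (hV : Measurable V) (hD : MeasurableSet D) (hw : Measurable w) (hw' : Measurable w') :
    ∀ᵐ x ∂μ.restrict D, ν.rnDeriv μ (V x) * w x = w' x * ν.rnDeriv μ x := by
  have hρ : Measurable (ν.rnDeriv μ) := Measure.measurable_rnDeriv _ _
  refine ae_eq_of_forall_setLIntegral_eq_of_sigmaFinite ((hρ.comp hV).mul hw) (hw'.mul hρ)
    fun E hE _ => ?_
  have hmem : MeasurableSet (E ∩ D) := hE.inter hD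
  simp only [Measure.restrict_restrict hE]
  calc ∫⁻ x in E ∩ D, ν.rnDeriv μ (V x) * w x ∂μ
      = ∫⁻ y in V '' (E ∩ D), ν.rnDeriv μ y ∂μ :=
        ((h.mono Set.inter_subset_right).setLIntegral_image hV hmem hw hρ).symm
    _ = ν (V '' (E ∩ D)) := Measure.setLIntegral_rnDeriv hνμ _
    _ = ∫⁻ x in E ∩ D, w' x ∂ν := h' _ Set.inter_subset_right hmem
    _ = ∫⁻ x in E ∩ D, w' x * ν.rnDeriv μ x ∂μ := by
        conv_lhs => rw [← Measure.withDensity_rnDeriv_eq ν μ hνμ,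
          setLIntegral_withDensity_eq_setLIntegral_mul _ hρ hw' hmem]
        simp only [Pi.mul_apply, mul_comm]

lemma comp [StandardBorelSpace α] (hW : HasJacobian μ W D' w') (hV : HasJacobian μ V D w)
    (hmV : Measurable V) (hinj : Set.InjOn V D) (hw : Measurable w) (hw' : Measurable w') :
    HasJacobian μ (W ∘ V) (D ∩ V ⁻¹' D') fun x => w' (V x) * w x := by
  intro E hE hmE
  have hED : E ⊆ D := hE.trans Set.inter_subset_left
  have himage : MeasurableSet (V '' E) := hmE.image_of_measurable_injOn hmV (hinj.mono hED)
  rw [Set.image_comp, hW _ (Set.image_subset_iff.2 (hE.trans Set.inter_subset_right)) himage,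
    (hV.mono hED).setLIntegral_image hmV hmE hw hw']

lemma symm (h : HasJacobian μ V D w) (hV : Measurable V) (hD : MeasurableSet D)
    (hWV : Set.LeftInvOn W V D) (hW : Measurable W) (hw : Measurable w) (hpos : ∀ x, w x ≠ 0)
    (htop : ∀ x, w x ≠ ∞) : HasJacobian μ W (V '' D) fun y => (w (W y))⁻¹ := by
  intro E hE hmE
  have himage : V '' (D ∩ V ⁻¹' E) = E := by
    rw [Set.image_inter_preimage, Set.inter_eq_right.2 hE]
  have hmem : MeasurableSet (D ∩ V ⁻¹' E) := hD.inter (hV hmE)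
  calc μ (W '' E) = μ (D ∩ V ⁻¹' E) := by
        rw [← himage, (hWV.mono Set.inter_subset_left).image_image, himage]
    _ = ∫⁻ x in D ∩ V ⁻¹' E, (w (W (V x)))⁻¹ * w x ∂μ := by
        rw [← setLIntegral_one]
        refine setLIntegral_congr_fun hmem fun x hx => ?_
        simp only [hWV hx.1, ENNReal.inv_mul_cancel (hpos x) (htop x)]
    _ = ∫⁻ y in E, (w (W y))⁻¹ ∂μ := by
        have hchange := (h.mono Set.inter_subset_left).setLIntegral_image hV hmem hw
          (f := fun y => (w (W y))⁻¹) (hw.comp hW).inv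
        rw [← hchange, himage]

end HasJacobian

end Jacobian

/-! ### Powers of a nonsingular shift -/

section Shift

variable {S : Type*} [MeasurableSpace S]

lemma measurable_shiftZ (n : ℤ) : Measurable (shiftZ (S := S) n) :=
  measurable_pi_lambda _ fun k => measurable_pi_apply (k + n)

lemma map_shiftZ_map_shiftZ (μ : Measure (Seq S)) (m n : ℤ) :
    (μ.map (shiftZ n)).map (shiftZ m) = μ.map (shiftZ (m + n)) := by
  rw [Measure.map_map (measurable_shiftZ m) (measurable_shiftZ n)]
  congr 1
  ext x k
  simp only [Function.comp_apply, shiftZ, add_assoc]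

lemma map_shiftZ_zero (μ : Measure (Seq S)) : μ.map (shiftZ 0) = μ := by
  have hid : shiftZ (S := S) 0 = id := by
    ext x k
    simp only [shiftZ, add_zero, id_eq]
  rw [hid, Measure.map_id]

/-- The Radon–Nikodym derivative `dμ∘Tⁿ/dμ`. -/
noncomputable def shiftDeriv (μ : Measure (Seq S)) (n : ℤ) : Seq S → ENNReal :=
  (μ.map (shiftZ (-n))).rnDeriv μ

variable [Fintype S] {μ : Measure (Seq S)}

namespace ShiftNonsingular

lemma map_shiftZ (h : ShiftNonsingular μ) (n : ℤ) :
    μ.map (shiftZ n) ≪ μ ∧ μ ≪ μ.map (shiftZ n) := by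
  have hnat (m : ℕ) : μ.map (shiftZ m) ≪ μ ∧ μ ≪ μ.map (shiftZ m) := by
    induction m with
    | zero =>
      simp only [Nat.cast_zero, map_shiftZ_zero, Measure.AbsolutelyContinuous.rfl, and_self]
    | succ m ih =>
      rw [Nat.cast_succ, add_comm, ← map_shiftZ_map_shiftZ]
      exact ⟨(ih.1.map (measurable_shiftZ 1)).trans h.1,
        h.2.trans (ih.2.map (measurable_shiftZ 1))⟩
  obtain ⟨m, rfl | rfl⟩ := Int.eq_nat_or_neg n
  · exact hnat m
  · have h₁ := (hnat m).1.map (measurable_shiftZ (-(m : ℤ)))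
    have h₂ := (hnat m).2.map (measurable_shiftZ (-(m : ℤ)))
    rw [map_shiftZ_map_shiftZ, neg_add_cancel, map_shiftZ_zero] at h₁ h₂
    exact ⟨h₂, h₁⟩

lemma ae_shiftDeriv [IsFiniteMeasure μ] (h : ShiftNonsingular μ) :
    ∀ᵐ x ∂μ, ∀ n, shiftDeriv μ n x ≠ 0 ∧ shiftDeriv μ n x ≠ ⊤ := by
  refine ae_all_iff.2 fun n => ?_
  filter_upwards [Measure.rnDeriv_pos' (h.map_shiftZ (-n)).2,
    Measure.rnDeriv_lt_top (μ.map (shiftZ (-n))) μ] with x hpos hlt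
  exact ⟨hpos.ne', hlt.ne⟩

end ShiftNonsingular

end Shift

/-! ### The renormalization pseudo full-group and its ratio set -/

section Groupoid

variable {S : Type*} [Fintype S] [MeasurableSpace S] {μ : Measure (Seq S)}

namespace RenormPFG

/-- The Radon–Nikodym derivative `dμ∘V/dμ` of an element of the pseudo full-group. -/
noncomputable def jacobian (g : RenormPFG μ) (x : Seq S) : ENNReal :=
  ENNReal.ofReal (Real.exp (g.logDeriv x))

lemma hasJacobian (g : RenormPFG μ) : HasJacobian μ g.toFun g.dom g.jacobian :=
  g.deriv_spec

lemma measurable_jacobian (g : RenormPFG μ) : Measurable g.jacobian :=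
  (Real.measurable_exp.comp g.meas_logDeriv).ennreal_ofReal

lemma jacobian_ne_zero (g : RenormPFG μ) (x : Seq S) : g.jacobian x ≠ 0 :=
  (ENNReal.ofReal_pos.2 (Real.exp_pos _)).ne'

lemma jacobian_ne_top (g : RenormPFG μ) (x : Seq S) : g.jacobian x ≠ ⊤ :=
  ENNReal.ofReal_ne_top

lemma ae_comp (g : RenormPFG μ) {p : Seq S → Prop} (hp : ∀ᵐ y ∂μ, p y) :
    ∀ᵐ x ∂μ.restrict g.dom, p (g.toFun x) :=
  g.hasJacobian.ae_comp g.meas_toFun g.meas_dom g.measurable_jacobian g.jacobian_ne_zero hp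

/-- The ratio `(dμ∘Tⁿ∘V/dμ) / (dμ∘Tⁿ/dμ)` of an element `V` of the pseudo full-group, its
numerator being computed by the chain rule. -/
noncomputable def ratio (g : RenormPFG μ) (n : ℤ) (x : Seq S) : ENNReal :=
  shiftDeriv μ n (g.toFun x) * g.jacobian x / shiftDeriv μ n x

lemma tendsto_ratio (g : RenormPFG μ) :
    ∀ᵐ x ∂μ.restrict g.dom, Tendsto (fun n => g.ratio n x) cofinite (𝓝 1) :=
  g.renorm

/-- The identity of the pseudo full-group. -/
noncomputable def refl [IsFiniteMeasure μ] (hns : ShiftNonsingular μ) : RenormPFG μ where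
  dom := Set.univ
  toFun := id
  logDeriv := 0
  meas_dom := .univ
  meas_toFun := measurable_id
  meas_logDeriv := measurable_zero
  injOn := Set.injOn_id _
  finite_diff := .of_forall fun x => by
    simp only [id_eq, ne_eq, not_true_eq_false, Set.ofPred_false, Set.finite_empty]
  deriv_spec E _ _ := by
    simp only [Set.image_id, Pi.zero_apply, Real.exp_zero, ENNReal.ofReal_one, setLIntegral_one]
  renorm := by
    filter_upwards [ae_restrict_of_ae hns.ae_shiftDeriv] with x hx
    refine tendsto_const_nhds.congr fun n => ?_
    simp only [id_eq, Pi.zero_apply, Real.exp_zero, ENNReal.ofReal_one, mul_one]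
    exact (ENNReal.div_self (hx n).1 (hx n).2).symm

lemma tendsto_ratio_mul_ratio (g h : RenormPFG μ) :
    ∀ᵐ x ∂μ.restrict (g.dom ∩ g.toFun ⁻¹' h.dom),
      Tendsto (fun n => h.ratio n (g.toFun x) * g.ratio n x) cofinite (𝓝 1) := by
  have hg := ae_restrict_of_ae_restrict_of_subset (Set.inter_subset_left (t := g.toFun ⁻¹' h.dom))
    (g.tendsto_ratio.and (g.ae_comp (ae_imp_of_ae_restrict h.tendsto_ratio)))
  filter_upwards [hg, ae_restrict_mem (g.meas_dom.inter (g.meas_toFun h.meas_dom))]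
    with x hx hmem
  simpa only [one_mul] using
    ENNReal.Tendsto.mul (hx.2 hmem.2) (.inr ENNReal.one_ne_top) hx.1 (.inr ENNReal.one_ne_top)

/-- Composition in the pseudo full-group: `g` followed by `h`. -/
noncomputable def trans [MeasurableSingletonClass S] [IsFiniteMeasure μ]
    (hns : ShiftNonsingular μ) (g h : RenormPFG μ) : RenormPFG μ where
  dom := g.dom ∩ g.toFun ⁻¹' h.dom
  toFun := h.toFun ∘ g.toFun
  logDeriv x := h.logDeriv (g.toFun x) + g.logDeriv x
  meas_dom := g.meas_dom.inter (g.meas_toFun h.meas_dom)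
  meas_toFun := h.meas_toFun.comp g.meas_toFun
  meas_logDeriv := (h.meas_logDeriv.comp g.meas_toFun).add g.meas_logDeriv
  injOn := h.injOn.comp (g.injOn.mono Set.inter_subset_left) fun _ hx => hx.2
  finite_diff := by
    have hg := ae_restrict_of_ae_restrict_of_subset
      (Set.inter_subset_left (t := g.toFun ⁻¹' h.dom))
      (g.finite_diff.and (g.ae_comp (ae_imp_of_ae_restrict h.finite_diff)))
    filter_upwards [hg, ae_restrict_mem (g.meas_dom.inter (g.meas_toFun h.meas_dom))]
      with x hx hmem
    refine (hx.1.union (hx.2 hmem.2)).subset fun k hk => ?_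
    by_contra! hfix
    simp only [Set.mem_union, Set.mem_ofPred_eq, not_or, not_not] at hfix
    exact hk (hfix.2.trans hfix.1)
  deriv_spec := by
    simpa only [HasJacobian, jacobian, Real.exp_add, ENNReal.ofReal_mul (Real.exp_nonneg _)]
      using h.hasJacobian.comp g.hasJacobian g.meas_toFun g.injOn g.measurable_jacobian
        h.measurable_jacobian
  renorm := by
    have hρ := ae_restrict_of_ae_restrict_of_subset
      (Set.inter_subset_left (t := g.toFun ⁻¹' h.dom)) (g.ae_comp hns.ae_shiftDeriv)
    filter_upwards [g.tendsto_ratio_mul_ratio h, hρ] with x hlim hx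
    refine hlim.congr fun n => ?_
    simp only [ratio, jacobian, Real.exp_add, ENNReal.ofReal_mul (Real.exp_nonneg _)]
    calc _ = (shiftDeriv μ n (g.toFun x))⁻¹ * shiftDeriv μ n (g.toFun x) *
          (shiftDeriv μ n (h.toFun (g.toFun x)) * (ENNReal.ofReal (Real.exp
            (h.logDeriv (g.toFun x))) * ENNReal.ofReal (Real.exp (g.logDeriv x))) /
              shiftDeriv μ n x) := by
          simp only [div_eq_mul_inv]
          ring
      _ = _ := by
          rw [ENNReal.inv_mul_cancel (hx n).1 (hx n).2, one_mul]
          rfl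

lemma hasJacobian_leftInv (g : RenormPFG μ) {W : Seq S → Seq S} (hW : Measurable W)
    (hWg : Set.LeftInvOn W g.toFun g.dom) :
    HasJacobian μ W (g.toFun '' g.dom) fun y => (g.jacobian (W y))⁻¹ :=
  g.hasJacobian.symm g.meas_toFun g.meas_dom hWg hW g.measurable_jacobian g.jacobian_ne_zero
    g.jacobian_ne_top

lemma measure_image_pos_iff (g : RenormPFG μ) {F : Set (Seq S)} (hF : MeasurableSet F)
    (hFg : F ⊆ g.dom) : 0 < μ (g.toFun '' F) ↔ 0 < μ F :=
  (g.hasJacobian.mono hFg).measure_image_pos_iff g.measurable_jacobian g.jacobian_ne_zero hF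

/-- The points of `E` which `g` returns to `E` with logarithmic derivative `ε`-close to `r`. -/
def returnSet (g : RenormPFG μ) (E : Set (Seq S)) (r ε : ℝ) : Set (Seq S) :=
  E ∩ g.dom ∩ g.toFun ⁻¹' E ∩ {x | |g.logDeriv x - r| < ε}

lemma measurableSet_returnSet (g : RenormPFG μ) {E : Set (Seq S)} (hE : MeasurableSet E)
    (r ε : ℝ) : MeasurableSet (g.returnSet E r ε) :=
  ((hE.inter g.meas_dom).inter (g.meas_toFun hE)).inter
    (measurableSet_lt (g.meas_logDeriv.sub_const r).abs measurable_const)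

lemma returnSet_subset_dom (g : RenormPFG μ) (E : Set (Seq S)) (r ε : ℝ) :
    g.returnSet E r ε ⊆ g.dom :=
  fun _ hx => hx.1.1.2

lemma image_returnSet_subset (g : RenormPFG μ) (E : Set (Seq S)) (r ε : ℝ) :
    g.toFun '' g.returnSet E r ε ⊆ E :=
  Set.image_subset_iff.2 fun _ hx => hx.1.2

variable [MeasurableSingletonClass S]

lemma measurableSet_image_returnSet (g : RenormPFG μ) {E : Set (Seq S)} (hE : MeasurableSet E)
    (r ε : ℝ) : MeasurableSet (g.toFun '' g.returnSet E r ε) :=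
  (g.measurableSet_returnSet hE r ε).image_of_measurable_injOn g.meas_toFun
    (g.injOn.mono (g.returnSet_subset_dom E r ε))

lemma exists_measurable_leftInvOn (g : RenormPFG μ) :
    ∃ W : Seq S → Seq S, Measurable W ∧ Set.LeftInvOn W g.toFun g.dom := by
  have := g.meas_dom.standardBorel
  have hemb : MeasurableEmbedding (g.dom.domRestrict g.toFun) :=
    (g.meas_toFun.comp measurable_subtype_coe).measurableEmbedding g.injOn.injective
  obtain ⟨W, hW, hWg⟩ := hemb.exists_measurable_extend measurable_subtype_coe fun x => ⟨x⟩
  exact ⟨W, hW, fun x hx => congrFun hWg ⟨x, hx⟩⟩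

lemma ae_leftInv (g : RenormPFG μ) {W : Seq S → Seq S} (hW : Measurable W)
    (hWg : Set.LeftInvOn W g.toFun g.dom) {p : Seq S → Prop}
    (hp : ∀ᵐ x ∂μ.restrict g.dom, p x) :
    ∀ᵐ y ∂μ.restrict (g.toFun '' g.dom), g.toFun (W y) = y ∧ p (W y) := by
  have himage := g.meas_dom.image_of_measurable_injOn g.meas_toFun g.injOn
  filter_upwards [ae_restrict_mem himage, (g.hasJacobian_leftInv hW hWg).ae_comp hW himage
    (g.measurable_jacobian.comp hW).inv (fun y => ENNReal.inv_ne_zero.2 (g.jacobian_ne_top _))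
    (ae_imp_of_ae_restrict hp)]
  rintro _ ⟨x, hx, rfl⟩ hpx
  rw [hWg hx] at hpx ⊢
  exact ⟨rfl, hpx hx⟩

/-- Inversion in the pseudo full-group, with respect to a measurable left inverse `W`. -/
noncomputable def symm [IsFiniteMeasure μ] (hns : ShiftNonsingular μ) (g : RenormPFG μ)
    {W : Seq S → Seq S} (hW : Measurable W) (hWg : Set.LeftInvOn W g.toFun g.dom) :
    RenormPFG μ where
  dom := g.toFun '' g.dom
  toFun := W
  logDeriv y := -g.logDeriv (W y)
  meas_dom := g.meas_dom.image_of_measurable_injOn g.meas_toFun g.injOn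
  meas_toFun := hW
  meas_logDeriv := (g.meas_logDeriv.comp hW).neg
  injOn := hWg.rightInvOn_image.injOn
  finite_diff := by
    filter_upwards [g.ae_leftInv hW hWg g.finite_diff] with y hy
    simpa only [hy.1, ne_comm] using hy.2
  deriv_spec := by
    simpa only [HasJacobian, jacobian, Real.exp_neg, ENNReal.ofReal_inv_of_pos (Real.exp_pos _)]
      using g.hasJacobian_leftInv hW hWg
  renorm := by
    filter_upwards [g.ae_leftInv hW hWg (g.tendsto_ratio.and (ae_restrict_of_ae hns.ae_shiftDeriv)),
      ae_restrict_of_ae hns.ae_shiftDeriv] with y hy hρ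
    have hinv := tendsto_inv_iff.2 hy.2.1
    rw [inv_one] at hinv
    refine hinv.congr fun n => ?_
    rw [ratio, hy.1, jacobian, Real.exp_neg, ENNReal.ofReal_inv_of_pos (Real.exp_pos _),
      ENNReal.inv_div (.inl (hy.2.2 n).2) (.inl (hy.2.2 n).1), div_eq_mul_inv, div_eq_mul_inv,
      ENNReal.mul_inv (.inl (hρ n).1) (.inl (hρ n).2), ← mul_assoc, mul_right_comm]
    rfl

end RenormPFG

namespace IsEssentialValueRenorm

lemma zero [IsFiniteMeasure μ] (hns : ShiftNonsingular μ) : IsEssentialValueRenorm μ 0 := by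
  intro E _ hpos ε hε
  refine ⟨.refl hns, hpos.trans_le (measure_mono fun x hx => ?_)⟩
  simpa only [RenormPFG.refl, Set.inter_univ, Set.preimage_id, Set.inter_self, Pi.zero_apply,
    sub_zero, abs_zero, hε, Set.ofPred_true] using hx

lemma of_forall_abs_sub_lt {r : ℝ} (h : ∀ ε > 0, ∃ q, |q - r| < ε ∧ IsEssentialValueRenorm μ q) :
    IsEssentialValueRenorm μ r := by
  intro E hE hpos ε hε
  obtain ⟨q, hqr, hq⟩ := h (ε / 2) (half_pos hε)
  obtain ⟨g, hg⟩ := hq E hE hpos (ε / 2) (half_pos hε)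
  refine ⟨g, hg.trans_le (measure_mono (Set.inter_subset_inter_right _ fun x hx => ?_))⟩
  rw [Set.mem_ofPred_eq] at hx ⊢
  linarith [abs_sub_le (g.logDeriv x) q r]

variable [MeasurableSingletonClass S] [IsFiniteMeasure μ]

lemma add (hns : ShiftNonsingular μ) {r s : ℝ} (hr : IsEssentialValueRenorm μ r)
    (hs : IsEssentialValueRenorm μ s) : IsEssentialValueRenorm μ (r + s) := by
  intro E hE hpos ε hε
  obtain ⟨g, hg⟩ := hr E hE hpos (ε / 2) (half_pos hε)
  set F := g.returnSet E r (ε / 2)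
  have himage : MeasurableSet (g.toFun '' F) := g.measurableSet_image_returnSet hE r _
  have hFpos : 0 < μ (g.toFun '' F) := (g.measure_image_pos_iff
    (g.measurableSet_returnSet hE r _) (g.returnSet_subset_dom E r _)).2 hg
  obtain ⟨h, hh⟩ := hs _ himage hFpos (ε / 2) (half_pos hε)
  set H := h.returnSet (g.toFun '' F) s (ε / 2)
  have hpre : 0 < μ (F ∩ g.toFun ⁻¹' H) := by
    refine (g.measure_image_pos_iff ((g.measurableSet_returnSet hE r _).inter (g.meas_toFun
      (h.measurableSet_returnSet himage s _))) fun x hx => g.returnSet_subset_dom E r _ hx.1).1 ?_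
    rw [Set.image_inter_preimage, Set.inter_eq_right.2 fun y hy => hy.1.1.1]
    exact hh
  refine ⟨g.trans hns h, hpre.trans_le (measure_mono ?_)⟩
  rintro x ⟨⟨⟨⟨hxE, hxg⟩, -⟩, hxr⟩, ⟨⟨-, hxh⟩, hhx⟩, hxs⟩
  refine ⟨⟨⟨hxE, hxg, hxh⟩, g.image_returnSet_subset E r _ hhx⟩, ?_⟩
  rw [Set.mem_ofPred_eq, abs_lt] at hxr hxs ⊢
  simp only [RenormPFG.trans]
  constructor <;> linarith

lemma neg (hns : ShiftNonsingular μ) {r : ℝ} (hr : IsEssentialValueRenorm μ r) :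
    IsEssentialValueRenorm μ (-r) := by
  intro E hE hpos ε hε
  obtain ⟨g, hg⟩ := hr E hE hpos ε hε
  obtain ⟨W, hW, hWg⟩ := g.exists_measurable_leftInvOn
  have himage : 0 < μ (g.toFun '' g.returnSet E r ε) := (g.measure_image_pos_iff
    (g.measurableSet_returnSet hE r _) (g.returnSet_subset_dom E r _)).2 hg
  refine ⟨g.symm hns hW hWg, himage.trans_le (measure_mono ?_)⟩
  rintro _ ⟨x, ⟨⟨⟨hxE, hxg⟩, hgx⟩, hxr⟩, rfl⟩
  refine ⟨⟨⟨hgx, x, hxg, rfl⟩, ?_⟩, ?_⟩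
  · simpa only [RenormPFG.symm, Set.mem_preimage, hWg hxg] using hxE
  · simpa only [RenormPFG.symm, hWg hxg, Set.mem_ofPred_eq, neg_sub_neg, abs_sub_comm] using hxr

end IsEssentialValueRenorm

/-- The ratio set `e(𝓡_A)`, as a subgroup of `ℝ`. -/
def ratioSet [MeasurableSingletonClass S] [IsFiniteMeasure μ] (hns : ShiftNonsingular μ) :
    AddSubgroup ℝ where
  carrier := {r | IsEssentialValueRenorm μ r}
  zero_mem' := .zero hns
  add_mem' := .add hns
  neg_mem' := .neg hns

lemma isClosed_ratioSet [MeasurableSingletonClass S] [IsFiniteMeasure μ]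
    (hns : ShiftNonsingular μ) : IsClosed (ratioSet hns : Set ℝ) := by
  refine isClosed_of_closure_subset fun r hr => .of_forall_abs_sub_lt fun ε hε => ?_
  obtain ⟨q, hq, hqr⟩ := Metric.mem_closure_iff.1 hr ε hε
  exact ⟨q, by rwa [abs_sub_comm], hq⟩

end Groupoid

/-! ### Subgroups of the real line -/

section RealSubgroup

lemma addSubgroup_real_eq_top_of_Icc_subset {H : AddSubgroup ℝ} {a b : ℝ} (hab : a < b)
    (h : Set.Icc a b ⊆ H) : H = ⊤ := by
  obtain ⟨c, hc⟩ := exists_between hab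
  have hopen : IsOpen (H : Set ℝ) :=
    H.isOpen_of_mem_nhds (g := c) (mem_of_superset (Icc_mem_nhds hc.1 hc.2) h)
  exact SetLike.coe_injective
    (IsClopen.eq_univ ⟨H.isClosed_of_isOpen hopen, hopen⟩ ⟨0, H.zero_mem⟩)

lemma irrational_div_of_linearIndependent {r s : ℝ} (h : LinearIndependent ℚ ![r, s]) :
    Irrational (r / s) := by
  have hs : s ≠ 0 := h.ne_zero 1
  rintro ⟨q, hq⟩
  have hpair := LinearIndependent.pair_iff.1 h 1 (-q) (by
    rw [one_smul, Rat.smul_def, Rat.cast_neg, hq, neg_mul, div_mul_cancel₀ r hs, add_neg_cancel])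
  exact one_ne_zero hpair.1

lemma addSubgroup_real_eq_top_of_linearIndependent {H : AddSubgroup ℝ}
    (hH : IsClosed (H : Set ℝ)) {r s : ℝ} (hr : r ∈ H) (hs : s ∈ H)
    (h : LinearIndependent ℚ ![r, s]) : H = ⊤ := by
  have hdense : Dense (H : Set ℝ) :=
    (dense_addSubgroupClosure_pair_iff.2 (irrational_div_of_linearIndependent h)).mono
      ((AddSubgroup.closure_le H).2 (Set.pair_subset hr hs))
  exact SetLike.coe_injective (hH.closure_eq.symm.trans hdense.closure_eq)

end RealSubgroup

/-! ### Cylinders and sets depending on finitely many coordinates -/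

section Cylinders

variable {ι S : Type*}

/-- The cylinder of all families agreeing with `u` on the set `I` of coordinates. -/
def cyl (I : Set ι) (u : ι → S) : Set (ι → S) := {x | Set.EqOn x u I}

lemma domRestrict_preimage_singleton (I : Set ι) (u : ι → S) :
    (Set.domRestrict I : (ι → S) → I → S) ⁻¹' {I.domRestrict u} = cyl I u := by
  ext x
  exact Set.domRestrict_eq_domRestrict_iff

lemma exists_subset_Icc_neg (I : Finset ℤ) :
    ∃ N : ℕ, ∀ n : ℕ, N ≤ n → I ⊆ Finset.Icc (-(n : ℤ)) n := by
  refine ⟨∑ k ∈ I, k.natAbs, fun n hn k hk => Finset.mem_Icc.2 ?_⟩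
  have hle : k.natAbs ≤ ∑ k ∈ I, k.natAbs :=
    Finset.single_le_sum (f := Int.natAbs) (fun _ _ => Nat.zero_le _) hk
  lia

variable [MeasurableSpace S]

lemma exists_dependsOn_Icc_of_mem_measurableCylinders {F : Set (ℤ → S)}
    (hF : F ∈ measurableCylinders fun _ : ℤ => S) :
    ∃ N : ℕ, DependsOn (· ∈ F) (Set.Icc (-(N : ℤ)) N) := by
  obtain ⟨I, T, -, rfl⟩ := (mem_measurableCylinders F).1 hF
  obtain ⟨N, hN⟩ := exists_subset_Icc_neg I
  refine ⟨N, fun x y hxy => ?_⟩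
  have hrestrict : I.restrict x = I.restrict y := by
    ext ⟨k, hk⟩
    exact hxy k (Finset.mem_Icc.1 (hN N le_rfl hk))
  simp only [mem_cylinder, hrestrict]

lemma exists_dependsOn_Icc_approx (μ : Measure (ℤ → S)) [IsFiniteMeasure μ] {E : Set (ℤ → S)}
    (hE : MeasurableSet E) {η : ℝ} (hη : 0 < η) :
    ∃ (N : ℕ) (F : Set (ℤ → S)), DependsOn (· ∈ F) (Set.Icc (-(N : ℤ)) N) ∧ MeasurableSet F ∧
      μ.real (symmDiff E F) < η := by
  have hdense := Measure.MeasureDense.of_generateFrom_isSetAlgebra_finite (μ := μ)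
    (isSetAlgebra_measurableCylinders (α := fun _ : ℤ => S)) generateFrom_measurableCylinders.symm
  obtain ⟨F, hF, hEF⟩ := hdense.approx E hE (measure_ne_top μ E) η hη
  obtain ⟨N, hN⟩ := exists_dependsOn_Icc_of_mem_measurableCylinders hF
  exact ⟨N, F, hN, .of_mem_measurableCylinders hF,
    (ENNReal.lt_ofReal_iff_toReal_lt (measure_ne_top _ _)).1 hEF⟩

variable [MeasurableSingletonClass S]

lemma measurableSet_cyl {I : Set ι} (hI : I.Countable) (u : ι → S) : MeasurableSet (cyl I u) :=
  MeasurableSet.pi hI fun k _ => measurableSet_singleton (u k)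

variable [Finite S]

lemma measure_le_of_forall_cyl_le {I : Set ι} (hI : I.Finite) {F : Set (ι → S)}
    (hF : DependsOn (· ∈ F) I) {ν₁ ν₂ : Measure (ι → S)}
    (h : ∀ x ∈ F, ν₁ (cyl I x) ≤ ν₂ (cyl I x)) : ν₁ F ≤ ν₂ F := by
  have := hI.to_subtype
  set ρ : (ι → S) → I → S := Set.domRestrict I
  set T := (ρ '' F).toFinite.toFinset
  have hT {w : I → S} : w ∈ T ↔ ∃ x ∈ F, ρ x = w := Set.Finite.mem_toFinset _
  have hFT : F = ρ ⁻¹' T := by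
    refine Set.Subset.antisymm (fun x hx => hT.2 ⟨x, hx, rfl⟩) fun y hy => ?_
    obtain ⟨x, hx, hxy⟩ := hT.1 hy
    exact (hF (Set.domRestrict_eq_domRestrict_iff.1 hxy)).mp hx
  have hmeas : ∀ w ∈ T, MeasurableSet (ρ ⁻¹' {w}) := fun w hw => by
    obtain ⟨x, -, rfl⟩ := hT.1 hw
    exact domRestrict_preimage_singleton I x ▸ measurableSet_cyl hI.countable x
  rw [hFT, ← sum_measure_preimage_singleton _ hmeas, ← sum_measure_preimage_singleton _ hmeas]
  refine Finset.sum_le_sum fun w hw => ?_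
  obtain ⟨x, hx, rfl⟩ := hT.1 hw
  exact domRestrict_preimage_singleton I x ▸ h x hx

lemma ext_of_forall_cyl_Icc {ν₁ ν₂ : Measure (ℤ → S)} [IsFiniteMeasure ν₁] (N : ℕ)
    (h : ∀ n : ℕ, N ≤ n → ∀ x, ν₁ (cyl (Set.Icc (-(n : ℤ)) n) x) =
      ν₂ (cyl (Set.Icc (-(n : ℤ)) n) x)) : ν₁ = ν₂ := by
  have hcyl : ∀ F ∈ measurableCylinders fun _ : ℤ => S, ν₁ F = ν₂ F := by
    intro F hF
    obtain ⟨N', hN'⟩ := exists_dependsOn_Icc_of_mem_measurableCylinders hF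
    have hdep : DependsOn (· ∈ F) (Set.Icc (-((max N N' : ℕ) : ℤ)) (max N N' : ℕ)) :=
      fun x y hxy => hN' fun k ⟨hk₁, hk₂⟩ => hxy k ⟨by lia, by lia⟩
    have heq := h (max N N') (le_max_left _ _)
    exact le_antisymm (measure_le_of_forall_cyl_le (Set.finite_Icc _ _) hdep fun x _ => (heq x).le)
      (measure_le_of_forall_cyl_le (Set.finite_Icc _ _) hdep fun x _ => (heq x).ge)
  exact ext_of_generate_finite _ generateFrom_measurableCylinders.symm
    isPiSystem_measurableCylinders hcyl (hcyl _ (univ_mem_measurableCylinders _))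

end Cylinders

/-! ### A window criterion for essential values -/

section WindowCriterion

variable {S : Type*} [Fintype S] [MeasurableSpace S] {μ : Measure (Seq S)} [IsFiniteMeasure μ]

lemma RenormPFG.measureReal_dom_inter_preimage_le (g : RenormPFG μ) {r ε : ℝ}
    (hg : ∀ x ∈ g.dom, |g.logDeriv x - r| < ε) {F : Set (Seq S)} (hF : MeasurableSet F) :
    μ.real (g.dom ∩ g.toFun ⁻¹' F) ≤ Real.exp (ε - r) * μ.real F := by
  have hmeas : MeasurableSet (g.dom ∩ g.toFun ⁻¹' F) := g.meas_dom.inter (g.meas_toFun hF)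
  have hle : ENNReal.ofReal (Real.exp (r - ε)) * μ (g.dom ∩ g.toFun ⁻¹' F) ≤ μ F := calc
    _ = ∫⁻ _ in g.dom ∩ g.toFun ⁻¹' F, ENNReal.ofReal (Real.exp (r - ε)) ∂μ :=
      (setLIntegral_const _ _).symm
    _ ≤ ∫⁻ x in g.dom ∩ g.toFun ⁻¹' F, ENNReal.ofReal (Real.exp (g.logDeriv x)) ∂μ :=
      setLIntegral_mono' hmeas fun x hx => ENNReal.ofReal_le_ofReal <| Real.exp_le_exp.2 <| by
        linarith [(abs_lt.1 (hg x hx.1)).1]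
    _ = μ (g.toFun '' (g.dom ∩ g.toFun ⁻¹' F)) :=
      (g.deriv_spec _ Set.inter_subset_left hmeas).symm
    _ ≤ μ F := measure_mono (Set.image_subset_iff.2 Set.inter_subset_right)
  have hreal := ENNReal.toReal_mono (measure_ne_top μ F) hle
  rw [ENNReal.toReal_mul, ENNReal.toReal_ofReal (Real.exp_pos _).le] at hreal
  calc μ.real (g.dom ∩ g.toFun ⁻¹' F)
    _ = Real.exp (ε - r) * (Real.exp (r - ε) * μ.real (g.dom ∩ g.toFun ⁻¹' F)) := by
      rw [← mul_assoc, ← Real.exp_add, sub_add_sub_cancel, sub_self, Real.exp_zero, one_mul]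
    _ ≤ Real.exp (ε - r) * μ.real F := mul_le_mul_of_nonneg_left hreal (Real.exp_pos _).le

lemma RenormPFG.measureReal_inter_dom_le_returnSet (g : RenormPFG μ) {r ε : ℝ}
    (hg : ∀ x ∈ g.dom, |g.logDeriv x - r| < ε) {E F : Set (Seq S)} (hE : MeasurableSet E)
    (hF : MeasurableSet F) (hgF : Set.MapsTo g.toFun (F ∩ g.dom) F) :
    μ.real (F ∩ g.dom) ≤
      μ.real (g.returnSet E r ε) + (1 + Real.exp (ε - r)) * μ.real (symmDiff E F) := by
  have hsub : F ∩ g.dom ⊆ g.returnSet E r ε ∪ (F \ E ∪ g.dom ∩ g.toFun ⁻¹' (F \ E)) := by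
    rintro x ⟨hxF, hxg⟩
    by_cases hxE : x ∈ E
    · by_cases hgx : g.toFun x ∈ E
      · exact .inl ⟨⟨⟨hxE, hxg⟩, hgx⟩, hg x hxg⟩
      · exact .inr (.inr ⟨hxg, hgF ⟨hxF, hxg⟩, hgx⟩)
    · exact .inr (.inl ⟨hxF, hxE⟩)
  have hdiff : μ.real (F \ E) ≤ μ.real (symmDiff E F) := measureReal_mono fun x hx => .inr hx
  calc μ.real (F ∩ g.dom)
    _ ≤ μ.real (g.returnSet E r ε) + (μ.real (F \ E) + μ.real (g.dom ∩ g.toFun ⁻¹' (F \ E))) :=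
      (measureReal_mono hsub).trans <| (measureReal_union_le _ _).trans <|
        add_le_add_right (measureReal_union_le _ _) _
    _ ≤ μ.real (g.returnSet E r ε) + (μ.real (F \ E) + Real.exp (ε - r) * μ.real (F \ E)) := by
      gcongr
      exact g.measureReal_dom_inter_preimage_le hg (hF.diff hE)
    _ = μ.real (g.returnSet E r ε) + (1 + Real.exp (ε - r)) * μ.real (F \ E) := by ring
    _ ≤ _ := by gcongr

/-- A set of positive measure is close to one depending only on a window of coordinates, and the
latter is invariant under the elements that fix the window. -/
lemma IsEssentialValueRenorm.of_forall_window [MeasurableSingletonClass S] {r : ℝ}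
    (h : ∀ ε > 0, ∃ c : ℝ, 0 < c ∧ ∀ N : ℕ, ∃ g : RenormPFG μ,
      (∀ x ∈ g.dom, |g.logDeriv x - r| < ε) ∧
      (∀ x ∈ g.dom, g.toFun x ∈ cyl (Set.Icc (-(N : ℤ)) N) x) ∧
      ∀ x, ENNReal.ofReal c * μ (cyl (Set.Icc (-(N : ℤ)) N) x) ≤
        μ (cyl (Set.Icc (-(N : ℤ)) N) x ∩ g.dom)) :
    IsEssentialValueRenorm μ r := by
  intro E hE hpos ε hε
  obtain ⟨c, hc, hwindow⟩ := h ε hε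
  have hEpos : 0 < μ.real E := ENNReal.toReal_pos hpos.ne' (measure_ne_top _ _)
  set K : ℝ := c + (1 + Real.exp (ε - r))
  have hK : 0 < K := by positivity
  obtain ⟨N, F, hFN, hF, hEF⟩ :=
    exists_dependsOn_Icc_approx μ hE (η := c * μ.real E / K) (by positivity)
  obtain ⟨g, hgr, hgN, hgF⟩ := hwindow N
  refine ⟨g, (ENNReal.toReal_pos_iff.1 ?_).1⟩
  change 0 < μ.real (g.returnSet E r ε)
  have hmaps : Set.MapsTo g.toFun (F ∩ g.dom) F := fun x hx => (hFN (hgN x hx.2)).mpr hx.1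
  have hcF : c * μ.real F ≤ μ.real (F ∩ g.dom) := by
    have hle : (ENNReal.ofReal c • μ) F ≤ μ.restrict g.dom F :=
      measure_le_of_forall_cyl_le (Set.finite_Icc _ _) hFN fun x _ => by
        rw [Measure.restrict_apply (measurableSet_cyl (Set.to_countable _) x)]
        exact hgF x
    rw [Measure.restrict_apply hF] at hle
    have hreal := ENNReal.toReal_mono (measure_ne_top μ _) hle
    rwa [Measure.smul_apply, smul_eq_mul, ENNReal.toReal_mul, ENNReal.toReal_ofReal hc.le] at hreal
  have hcover : E ⊆ F ∪ symmDiff E F := fun x hx =>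
    (em (x ∈ F)).imp_right fun hxF => .inl ⟨hx, hxF⟩
  have hEle : c * μ.real E ≤ c * (μ.real F + μ.real (symmDiff E F)) :=
    mul_le_mul_of_nonneg_left ((measureReal_mono hcover).trans (measureReal_union_le _ _)) hc.le
  have hreturn := g.measureReal_inter_dom_le_returnSet hgr hE hF hmaps
  rw [lt_div_iff₀ hK] at hEF
  linarith

end WindowCriterion

/-! ### Cylinder weights of Markov measures -/

section Weights

@[to_additive]
lemma prod_Ico_int_add {R : Type*} [CommMonoid R] (f : ℤ → R) (a : ℤ) (m : ℕ) :
    ∏ k ∈ Finset.Ico a (a + m), f k = ∏ i ∈ Finset.range m, f (a + i) := by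
  rw [Int.Ico_eq_finset_map, Finset.prod_map, add_sub_cancel_left, Int.toNat_natCast]
  rfl

variable {S : Type*}

/-- The measure which the Markov measure with transition matrices `P` and coordinate
distributions `π` gives to the cylinder of `x` over the coordinates from `a` to `b`. -/
noncomputable def weight (P : ℤ → S → S → ℝ) (π : ℤ → S → ℝ) (a b : ℤ) (x : Seq S) : ℝ :=
  π a (x a) * ∏ k ∈ Finset.Ico a b, P k (x k) (x (k + 1))

lemma measurableSet_SFT [Countable S] [MeasurableSpace S] [MeasurableSingletonClass S]
    (A : S → S → Bool) : MeasurableSet (SFT A) := by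
  have hedge (n : ℤ) : Measurable fun x : Seq S => A (x n) (x (n + 1)) :=
    (Measurable.of_discrete (f := fun p : S × S => A p.1 p.2)).comp
      (by fun_prop : Measurable fun x : Seq S => (x n, x (n + 1)))
  simp only [SFT, Set.ofPred_forall]
  exact .iInter fun n => hedge n (measurableSet_singleton true)

variable [Fintype S] [MeasurableSpace S] {μ : Measure (Seq S)} {A : S → S → Bool}
  {P : ℤ → S → S → ℝ} {π : ℤ → S → ℝ}

namespace IsMarkovMeasure

lemma measure_cyl (hμ : IsMarkovMeasure μ A P π) {a b : ℤ} (hab : a ≤ b) (x : Seq S) :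
    μ (cyl (Set.Icc a b) x) = ENNReal.ofReal (weight P π a b x) := by
  obtain ⟨m, rfl⟩ := Int.le.dest hab
  have hset : cyl (Set.Icc a (a + m)) x =
      {y : Seq S | ∀ i : Fin (m + 1), y (a - 1 + 1 + ((i : ℕ) : ℤ)) = x (a + (i : ℕ))} := by
    ext y
    rw [sub_add_cancel]
    refine ⟨fun hy i => hy ⟨by lia, by have := i.is_le; lia⟩, fun hy k ⟨hak, hkm⟩ => ?_⟩
    obtain ⟨i, rfl⟩ := Int.le.dest hak
    exact hy ⟨i, by lia⟩
  rw [hset, hμ.cylinder (a - 1) m fun i => x (a + (i : ℕ)), weight, prod_Ico_int_add,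
    ← Fin.prod_univ_eq_prod_range fun i : ℕ => P (a + i) (x (a + i)) (x (a + i + 1)),
    sub_add_cancel]
  simp only [Fin.val_zero, Fin.val_castSucc, Fin.val_succ, Nat.cast_zero, Nat.cast_succ, add_zero,
    add_assoc]

lemma shift [MeasurableSingletonClass S] (hμ : IsMarkovMeasure μ A P π) (n : ℤ) :
    IsMarkovMeasure (μ.map (shiftZ n)) A (fun k => P (k + n)) (fun k => π (k + n)) where
  isProb := by
    have := hμ.isProb
    exact Measure.isProbabilityMeasure_map (measurable_shiftZ n).aemeasurable
  stochastic k := hμ.stochastic _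
  compat k := hμ.compat _
  dist_nonneg k := hμ.dist_nonneg _
  dist_sum k := hμ.dist_sum _
  consistent k t := by rw [hμ.consistent, add_right_comm]
  supp := by
    have hpre : shiftZ n ⁻¹' SFT A = SFT A := by
      ext x
      refine ⟨fun hx k => ?_, fun hx k => ?_⟩
      · simpa only [shiftZ, add_right_comm _ 1 n, sub_add_cancel] using hx (k - n)
      · simpa only [shiftZ, add_right_comm _ 1 n] using hx (k + n)
    rw [Measure.map_apply (measurable_shiftZ n) (measurableSet_SFT A), hpre, hμ.supp]
  cylinder k m w := by
    have hmeas : MeasurableSet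
        {x : Seq S | ∀ i : Fin (m + 1), x (k + 1 + ((i : ℕ) : ℤ)) = w i} := by
      simp only [Set.ofPred_forall]
      exact .iInter fun i => measurable_pi_apply (X := fun _ => S) (k + 1 + ((i : ℕ) : ℤ))
        (measurableSet_singleton (w i))
    have hcyl := hμ.cylinder (k + n) m w
    rw [Measure.map_apply (measurable_shiftZ n) hmeas]
    simp only [add_right_comm _ n] at hcyl
    exact hcyl

end IsMarkovMeasure

end Weights

/-! ### Exchanges of words -/

section Exchange

variable {S : Type*}

/-- The sequence with the values of `v` on `I` and those of `x` elsewhere. -/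
def overwrite (I : Finset ℤ) (v x : Seq S) : Seq S := I.piecewise v x

/-- The left ends of the edges `(k, k + 1)` with both ends in `I`. -/
def edges (I : Finset ℤ) : Finset ℤ := I.filter (· + 1 ∈ I)

/-- `u` and `v` are admissible along the edges in `I` and agree at the ends of every run of
consecutive coordinates in `I`, so that rewriting `u` to `v` on `I` affects no other edge. -/
structure IsExchange (A : S → S → Bool) (I : Finset ℤ) (u v : Seq S) : Prop where
  pred_mem : ∀ k ∈ I, u k ≠ v k → k - 1 ∈ I
  succ_mem : ∀ k ∈ I, u k ≠ v k → k + 1 ∈ I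
  adm_left : ∀ k ∈ edges I, A (u k) (u (k + 1)) = true
  adm_right : ∀ k ∈ edges I, A (v k) (v (k + 1)) = true

/-- The logarithmic change of weight when `u` is rewritten to `v` on `I`. -/
noncomputable def exchangeLog (P : ℤ → S → S → ℝ) (I : Finset ℤ) (u v : Seq S) : ℝ :=
  ∑ k ∈ edges I, (Real.log (P k (v k) (v (k + 1))) - Real.log (P k (u k) (u (k + 1))))

variable {A : S → S → Bool} {P : ℤ → S → S → ℝ} {π : ℤ → S → ℝ} {I : Finset ℤ} {u v x : Seq S}
  {J : Set ℤ}

lemma mem_edges {k : ℤ} : k ∈ edges I ↔ k ∈ I ∧ k + 1 ∈ I := Finset.mem_filter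

lemma overwrite_of_mem {k : ℤ} (hk : k ∈ I) (v x : Seq S) : overwrite I v x k = v k :=
  I.piecewise_eq_of_mem _ _ hk

lemma overwrite_of_notMem {k : ℤ} (hk : k ∉ I) (v x : Seq S) : overwrite I v x k = x k :=
  I.piecewise_eq_of_notMem _ _ hk

lemma overwrite_eq_self (hx : x ∈ cyl I u) {k : ℤ} (hk : k ∈ I → u k = v k) :
    overwrite I v x k = x k := by
  by_cases hkI : k ∈ I
  · rw [overwrite_of_mem hkI, hx hkI, hk hkI]
  · exact overwrite_of_notMem hkI v x

lemma overwrite_mem_cyl (I : Finset ℤ) (v x : Seq S) : overwrite I v x ∈ cyl I v :=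
  fun _ hk => overwrite_of_mem hk v x

lemma leftInvOn_overwrite (I : Finset ℤ) (u v : Seq S) :
    Set.LeftInvOn (overwrite I u) (overwrite I v) (cyl I u) := by
  intro x hx
  ext k
  by_cases hk : k ∈ I
  · rw [overwrite_of_mem hk, hx hk]
  · rw [overwrite_of_notMem hk, overwrite_of_notMem hk]

lemma overwrite_image {E : Set (Seq S)} (hE : E ⊆ cyl I u) :
    overwrite I v '' E = overwrite I u ⁻¹' E ∩ cyl I v := by
  refine Set.Subset.antisymm (Set.image_subset_iff.2 fun x hx => ⟨?_, overwrite_mem_cyl I v x⟩)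
    fun y ⟨hy, hyv⟩ => ⟨_, hy, leftInvOn_overwrite I v u hyv⟩
  rwa [Set.mem_preimage, leftInvOn_overwrite I u v (hE hx)]

lemma cyl_subset_cyl (hIJ : (I : Set ℤ) ⊆ J) (hx : x ∈ cyl I u) : cyl J x ⊆ cyl I u :=
  fun _ hz => (hz.mono hIJ).trans hx

lemma overwrite_preimage_cyl (hIJ : (I : Set ℤ) ⊆ J) (hx : x ∈ cyl I v) :
    overwrite I v ⁻¹' cyl J x ∩ cyl I u = cyl J (overwrite I u x) := by
  ext z
  refine ⟨fun ⟨hzx, hzu⟩ k hk => ?_, fun hz => ⟨fun k hk => ?_, fun k hk => ?_⟩⟩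
  · by_cases hkI : k ∈ I
    · rw [overwrite_of_mem hkI, hzu hkI]
    · rw [overwrite_of_notMem hkI, ← hzx hk, overwrite_of_notMem hkI]
  · by_cases hkI : k ∈ I
    · rw [overwrite_of_mem hkI, hx hkI]
    · rw [overwrite_of_notMem hkI, hz hk, overwrite_of_notMem hkI]
  · rw [hz (hIJ hk), overwrite_of_mem hk]

lemma IsExchange.weight_overwrite (h : IsExchange A I u v)
    (hP : ∀ n s t, A s t = true → 0 < P n s t) (π : ℤ → S → ℝ) {a b : ℤ}
    (hI : I ⊆ Finset.Icc a b) (hx : x ∈ cyl I u) :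
    weight P π a b (overwrite I v x) = Real.exp (exchangeLog P I u v) * weight P π a b x := by
  have ha : overwrite I v x a = x a := overwrite_eq_self hx fun haI => by
    by_contra hne
    have := Finset.mem_Icc.1 (hI (h.pred_mem a haI hne))
    lia
  have hedge : ∀ k ∈ Finset.Ico a b, P k (overwrite I v x k) (overwrite I v x (k + 1)) =
      (if k ∈ edges I then Real.exp (Real.log (P k (v k) (v (k + 1))) -
        Real.log (P k (u k) (u (k + 1)))) else 1) * P k (x k) (x (k + 1)) := by
    intro k _
    split_ifs with hk
    · obtain ⟨hkI, hkI'⟩ := mem_edges.1 hk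
      have hu := hP k _ _ (h.adm_left k hk)
      rw [overwrite_of_mem hkI, overwrite_of_mem hkI', hx hkI, hx hkI', Real.exp_sub,
        Real.exp_log hu, Real.exp_log (hP k _ _ (h.adm_right k hk)), div_mul_cancel₀ _ hu.ne']
    · have hk₀ : overwrite I v x k = x k := overwrite_eq_self hx fun hkI =>
        by_contra fun hne => hk (mem_edges.2 ⟨hkI, h.succ_mem k hkI hne⟩)
      have hk₁ : overwrite I v x (k + 1) = x (k + 1) := overwrite_eq_self hx fun hkI =>
        by_contra fun hne => hk (mem_edges.2 ⟨by
          simpa only [add_sub_cancel_right] using h.pred_mem _ hkI hne, hkI⟩)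
      rw [hk₀, hk₁, one_mul]
  have hsub : edges I ⊆ Finset.Ico a b := fun k hk => by
    have hk₁ := Finset.mem_Icc.1 (hI (mem_edges.1 hk).1)
    have hk₂ := Finset.mem_Icc.1 (hI (mem_edges.1 hk).2)
    exact Finset.mem_Ico.2 ⟨hk₁.1, by lia⟩
  rw [weight, weight, ha, Finset.prod_congr rfl hedge, Finset.prod_mul_distrib,
    Finset.prod_ite_mem, Finset.inter_eq_right.2 hsub, exchangeLog, Real.exp_sum, mul_left_comm]

variable [MeasurableSpace S]

lemma measurable_overwrite (I : Finset ℤ) (v : Seq S) : Measurable (overwrite I v) := by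
  refine measurable_pi_lambda _ fun k => ?_
  by_cases hk : k ∈ I
  · simp only [overwrite_of_mem hk, measurable_const]
  · simp only [overwrite_of_notMem hk, measurable_pi_apply]

variable [Fintype S] [MeasurableSingletonClass S] {μ : Measure (Seq S)}

namespace IsExchange

lemma map_overwrite_restrict (h : IsExchange A I u v) (hμ : IsMarkovMeasure μ A P π)
    (hP : ∀ n s t, A s t = true → 0 < P n s t) :
    (μ.restrict (cyl I v)).map (overwrite I u) =
      ENNReal.ofReal (Real.exp (exchangeLog P I u v)) • μ.restrict (cyl I u) := by
  have := hμ.isProb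
  obtain ⟨N, hN⟩ := exists_subset_Icc_neg I
  refine ext_of_forall_cyl_Icc N fun n hn x => ?_
  have hI : (I : Set ℤ) ⊆ Set.Icc (-(n : ℤ)) n := fun k hk => Finset.mem_Icc.1 (hN n hn hk)
  have hmeas : MeasurableSet (cyl (Set.Icc (-(n : ℤ)) n) x) :=
    measurableSet_cyl (Set.to_countable _) x
  rw [Measure.map_apply (measurable_overwrite I u) hmeas,
    Measure.restrict_apply (measurable_overwrite I u hmeas), Measure.smul_apply,
    Measure.restrict_apply hmeas, smul_eq_mul]
  by_cases hx : x ∈ cyl I u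
  · rw [overwrite_preimage_cyl hI hx, Set.inter_eq_left.2 (cyl_subset_cyl hI hx),
      hμ.measure_cyl (by lia), hμ.measure_cyl (by lia),
      h.weight_overwrite hP π (hN n hn) hx, ENNReal.ofReal_mul (Real.exp_pos _).le]
  · have hnot : ∀ z ∈ cyl I u, z ∉ cyl (Set.Icc (-(n : ℤ)) n) x := fun z hzu hzx =>
      hx fun k hk => (hzx (hI hk)).symm.trans (hzu hk)
    have hempty₁ : overwrite I u ⁻¹' cyl (Set.Icc (-(n : ℤ)) n) x ∩ cyl I v = ∅ :=
      Set.eq_empty_of_forall_notMem fun z hz => hnot _ (overwrite_mem_cyl I u z) hz.1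
    have hempty₂ : cyl (Set.Icc (-(n : ℤ)) n) x ∩ cyl I u = ∅ :=
      Set.eq_empty_of_forall_notMem fun z hz => hnot z hz.2 hz.1
    rw [hempty₁, hempty₂, measure_empty, mul_zero]

lemma hasJacobian (h : IsExchange A I u v) (hμ : IsMarkovMeasure μ A P π)
    (hP : ∀ n s t, A s t = true → 0 < P n s t) :
    HasJacobian μ (overwrite I v) (cyl I u) fun _ =>
      ENNReal.ofReal (Real.exp (exchangeLog P I u v)) := by
  intro E hEu hE
  rw [overwrite_image hEu, ← Measure.restrict_apply (measurable_overwrite I u hE),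
    ← Measure.map_apply (measurable_overwrite I u) hE, h.map_overwrite_restrict hμ hP,
    Measure.smul_apply, Measure.restrict_apply hE, Set.inter_eq_left.2 hEu, smul_eq_mul,
    setLIntegral_const]

/-- An exchange whose change of weight relative to the shifted measures tends to `1`, as an element
of the renormalization pseudo full-group. -/
noncomputable def renormPFG (h : IsExchange A I u v) (hμ : IsMarkovMeasure μ A P π)
    (hP : ∀ n s t, A s t = true → 0 < P n s t) (hns : ShiftNonsingular μ)
    (hlim : Tendsto (fun n : ℤ => exchangeLog (fun k => P (k + n)) I u v) cofinite (𝓝 0)) :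
    RenormPFG μ where
  dom := cyl I u
  toFun := overwrite I v
  logDeriv _ := exchangeLog P I u v
  meas_dom := measurableSet_cyl (Set.to_countable _) u
  meas_toFun := measurable_overwrite I v
  meas_logDeriv := measurable_const
  injOn := (leftInvOn_overwrite I u v).injOn
  finite_diff := .of_forall fun x => I.finite_toSet.subset fun k hk =>
    by_contra fun hkI => hk (overwrite_of_notMem hkI v x)
  deriv_spec := h.hasJacobian hμ hP
  renorm := by
    have := hμ.isProb
    have hshift (n : ℤ) := h.hasJacobian (hμ.shift (-n)) fun k => hP (k + -n)
    have hratio : ∀ᵐ x ∂μ.restrict (cyl I u), ∀ n : ℤ, shiftDeriv μ n (overwrite I v x) *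
          ENNReal.ofReal (Real.exp (exchangeLog P I u v)) =
        ENNReal.ofReal (Real.exp (exchangeLog (fun k => P (k + -n)) I u v)) * shiftDeriv μ n x :=
      ae_all_iff.2 fun n => (h.hasJacobian hμ hP).rnDeriv_comp_mul (hshift n)
        (hns.map_shiftZ (-n)).1 (measurable_overwrite I v)
        (measurableSet_cyl (Set.to_countable _) u) measurable_const measurable_const
    have hexp := (ENNReal.continuous_ofReal.comp Real.continuous_exp).tendsto 0
    simp only [Function.comp_apply, Real.exp_zero, ENNReal.ofReal_one] at hexp
    filter_upwards [hratio, ae_restrict_of_ae hns.ae_shiftDeriv] with x hx hfin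
    refine (hexp.comp (hlim.comp neg_injective.tendsto_cofinite)).congr fun n => ?_
    change _ = shiftDeriv μ n _ * _ / shiftDeriv μ n x
    rw [hx n, ENNReal.mul_div_cancel_right (hfin n).1 (hfin n).2]
    rfl

end IsExchange

end Exchange

/-! ### Uniform mixing -/

section Mixing

lemma prod_Ico_int_mul_prod_Ico {R : Type*} [CommMonoid R] (f : ℤ → R) {a b c : ℤ} (hab : a ≤ b)
    (hbc : b ≤ c) : (∏ k ∈ Finset.Ico a b, f k) * ∏ k ∈ Finset.Ico b c, f k =
      ∏ k ∈ Finset.Ico a c, f k := by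
  rw [← Finset.Ico_union_Ico_eq_Ico hab hbc,
    Finset.prod_union (Finset.Ico_disjoint_Ico_consecutive a b c)]

variable {S : Type*}

/-- Any two states are joined by an admissible path of `M` steps, and admissible transitions have
probability at least `δ`. -/
structure IsUniformlyMixing (A : S → S → Bool) (P : ℤ → S → S → ℝ) (M : ℕ) (δ : ℝ) : Prop where
  pos : 0 < δ
  le_one : δ ≤ 1
  le_of_adm : ∀ n s t, A s t = true → δ ≤ P n s t
  exists_path : ∀ s t : S, ∃ p : ℕ → S, p 0 = s ∧ p M = t ∧ ∀ i < M, A (p i) (p (i + 1)) = true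

/-- The coordinates of two words of `m + 1` letters placed at `i` and `j`. -/
noncomputable def wordPair (i j : ℤ) (m : ℕ) : Finset ℤ :=
  Finset.Icc i (i + m) ∪ Finset.Icc j (j + m)

lemma mem_wordPair {i j : ℤ} {m : ℕ} {k : ℤ} :
    k ∈ wordPair i j m ↔ (i ≤ k ∧ k ≤ i + m) ∨ (j ≤ k ∧ k ≤ j + m) := by
  rw [wordPair, Finset.mem_union, Finset.mem_Icc, Finset.mem_Icc]

variable {A : S → S → Bool} {P : ℤ → S → S → ℝ} {π : ℤ → S → ℝ} {M : ℕ} {δ : ℝ}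

namespace IsUniformlyMixing

lemma exists_splice (h : IsUniformlyMixing A P M δ) (x y : Seq S) (a : ℤ) :
    ∃ z : Seq S, Set.EqOn z x (Set.Iic a) ∧ Set.EqOn z y (Set.Ici (a + M)) ∧
      ∀ k ∈ Set.Ico a (a + M), A (z k) (z (k + 1)) = true := by
  obtain ⟨p, hp₀, hpM, hp⟩ := h.exists_path (x a) (y (a + M))
  let z : Seq S := fun k => if k < a then x k else if k ≤ a + M then p (k - a).toNat else y k
  have hpath : ∀ l : ℕ, l ≤ M → z (a + l) = p l := fun l hl => by
    simp only [z, if_neg (by lia : ¬a + (l : ℤ) < a), if_pos (by lia : a + (l : ℤ) ≤ a + M),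
      add_sub_cancel_left, Int.toNat_natCast]
  refine ⟨z, fun k (hk : k ≤ a) => ?_, fun k (hk : a + M ≤ k) => ?_, fun k ⟨hak, hkM⟩ => ?_⟩
  · obtain hk | rfl := hk.lt_or_eq
    · exact if_pos hk
    · simpa only [Nat.cast_zero, add_zero, hp₀] using hpath 0 M.zero_le
  · obtain hk | rfl := hk.lt_or_eq
    · simp only [z, if_neg (by lia : ¬k < a), if_neg hk.not_ge]
    · rw [hpath M le_rfl, hpM]
  · obtain ⟨l, rfl⟩ := Int.le.dest hak
    rw [add_assoc, hpath l (by lia), ← Nat.cast_succ, hpath (l + 1) (by lia)]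
    exact hp l (by lia)

lemma pow_le_prod (h : IsUniformlyMixing A P M δ) {a b : ℤ} {n : ℕ} (hn : b ≤ a + n) {x : Seq S}
    (hx : ∀ k ∈ Set.Ico a b, A (x k) (x (k + 1)) = true) :
    δ ^ n ≤ ∏ k ∈ Finset.Ico a b, P k (x k) (x (k + 1)) := calc
  δ ^ n ≤ δ ^ (Finset.Ico a b).card :=
    pow_le_pow_of_le_one h.pos.le h.le_one (by rw [Int.card_Ico]; lia)
  _ = ∏ _k ∈ Finset.Ico a b, δ := (Finset.prod_const δ).symm
  _ ≤ _ := Finset.prod_le_prod (fun _ _ => h.pos.le) fun k hk =>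
    h.le_of_adm k _ _ (hx k (Finset.mem_Ico.1 hk))

lemma exists_eqOn_wordPair (h : IsUniformlyMixing A P M δ) {i j : ℤ} {m : ℕ}
    (hij : i + m + M ≤ j - M) {u : Seq S}
    (hu : ∀ k ∈ edges (wordPair i j m), A (u k) (u (k + 1)) = true) (x : Seq S) :
    ∃ z : Seq S, Set.EqOn z x (Set.Icc (i + m + M) (j - M)) ∧ Set.EqOn z u (wordPair i j m) ∧
      (∀ k ∈ Set.Ico i (i + m + M), A (z k) (z (k + 1)) = true) ∧
      ∀ k ∈ Set.Ico (j - M) (j + m), A (z k) (z (k + 1)) = true := by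
  obtain ⟨y, hyu, hyx, hy⟩ := h.exists_splice u x (i + m)
  obtain ⟨z, hzy, hzu, hz⟩ := h.exists_splice y u (j - M)
  rw [sub_add_cancel] at hzu hz
  have hzl : ∀ k ≤ i + m, z k = u k := fun k hk =>
    (hzy (show k ≤ j - M by lia)).trans (hyu hk)
  refine ⟨z, fun k ⟨hk₁, hk₂⟩ => (hzy hk₂).trans (hyx hk₁), fun k hk => ?_,
    fun k ⟨hik, hkM⟩ => ?_, fun k ⟨hMk, hkm⟩ => ?_⟩
  · obtain ⟨-, hkm⟩ | ⟨hjk, -⟩ := mem_wordPair.1 hk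
    · exact hzl k hkm
    · exact hzu hjk
  · obtain hk | hk := lt_or_ge k (i + m)
    · rw [hzl k hk.le, hzl (k + 1) (by lia)]
      exact hu k (mem_edges.2 ⟨mem_wordPair.2 (by lia), mem_wordPair.2 (by lia)⟩)
    · rw [hzy (show k ≤ j - M by lia), hzy (show k + 1 ≤ j - M by lia)]
      exact hy k ⟨hk, hkM⟩
  · obtain hk | hk := lt_or_ge k j
    · exact hz k ⟨hMk, hk⟩
    · rw [hzu hk, hzu (show j ≤ k + 1 by lia)]
      exact hu k (mem_edges.2 ⟨mem_wordPair.2 (by lia), mem_wordPair.2 (by lia)⟩)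

end IsUniformlyMixing

variable [Fintype S] [MeasurableSpace S] {μ : Measure (Seq S)}

lemma IsMarkovMeasure.dist_le_one (hμ : IsMarkovMeasure μ A P π) (n : ℤ) (s : S) : π n s ≤ 1 :=
  hμ.dist_sum n ▸ Finset.single_le_sum (fun t _ => hμ.dist_nonneg n t) (Finset.mem_univ s)

lemma IsMarkovMeasure.weight_le_dist (hμ : IsMarkovMeasure μ A P π) {a b : ℤ} (hab : a ≤ b)
    (x : Seq S) : weight P π a b x ≤ π b (x b) := by
  have hsub : cyl (Set.Icc a b) x ⊆ cyl (Set.Icc b b) x :=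
    fun _ hy => hy.mono (Set.Icc_subset_Icc_left hab)
  have hle := measure_mono (μ := μ) hsub
  rw [hμ.measure_cyl hab, hμ.measure_cyl le_rfl, weight, weight, Finset.Ico_self,
    Finset.prod_empty, mul_one] at hle
  exact (ENNReal.ofReal_le_ofReal_iff (hμ.dist_nonneg _ _)).1 hle

namespace IsUniformlyMixing

lemma le_dist (h : IsUniformlyMixing A P M δ) (hμ : IsMarkovMeasure μ A P π) (n : ℤ) (s : S) :
    δ ^ M / Fintype.card S ≤ π n s := by
  have : Nonempty S := ⟨s⟩
  have hcard : (Fintype.card S : ℝ) ≠ 0 := Nat.cast_ne_zero.2 Fintype.card_ne_zero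
  obtain ⟨t, -, ht⟩ : ∃ t ∈ Finset.univ, (Fintype.card S : ℝ)⁻¹ ≤ π (n - M) t := by
    refine Finset.exists_le_of_sum_le Finset.univ_nonempty ?_
    rw [hμ.dist_sum, Finset.sum_const, Finset.card_univ, nsmul_eq_mul, mul_inv_cancel₀ hcard]
  obtain ⟨x, hxt, hxs, hx⟩ := h.exists_splice (fun _ => t) (fun _ => s) (n - M)
  rw [sub_add_cancel] at hxs hx
  calc δ ^ M / Fintype.card S = (Fintype.card S : ℝ)⁻¹ * δ ^ M := div_eq_inv_mul _ _
    _ ≤ weight P π (n - M) n x :=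
      mul_le_mul (ht.trans_eq (congrArg _ (hxt Set.self_mem_Iic).symm)) (h.pow_le_prod (by lia) hx)
        (pow_nonneg h.pos.le _) (hμ.dist_nonneg _ _)
    _ ≤ π n (x n) := hμ.weight_le_dist (by lia) x
    _ = π n s := congrArg _ (hxs Set.self_mem_Ici)

lemma le_weight_of_eqOn (h : IsUniformlyMixing A P M δ) (hμ : IsMarkovMeasure μ A P π)
    {a b c d : ℤ} {n : ℕ} (hab : a ≤ b) (hban : b ≤ a + n) (hbc : b ≤ c) (hcd : c ≤ d)
    (hdcn : d ≤ c + n) {x z : Seq S} (hzx : Set.EqOn z x (Set.Icc b c))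
    (hz₁ : ∀ k ∈ Set.Ico a b, A (z k) (z (k + 1)) = true)
    (hz₂ : ∀ k ∈ Set.Ico c d, A (z k) (z (k + 1)) = true) :
    δ ^ M / Fintype.card S * (δ ^ n * δ ^ n) * weight P π b c x ≤ weight P π a d z := by
  have hδ := h.pos
  have hmid : ∏ k ∈ Finset.Ico b c, P k (x k) (x (k + 1)) =
      ∏ k ∈ Finset.Ico b c, P k (z k) (z (k + 1)) := Finset.prod_congr rfl fun k hk => by
    obtain ⟨hbk, hkc⟩ := Finset.mem_Ico.1 hk
    rw [hzx ⟨hbk, hkc.le⟩, hzx ⟨by lia, by lia⟩]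
  have hmid₀ : 0 ≤ ∏ k ∈ Finset.Ico b c, P k (z k) (z (k + 1)) :=
    Finset.prod_nonneg fun k _ => (hμ.stochastic k).1 _ _
  have hleft := h.pow_le_prod hban hz₁
  have hright := h.pow_le_prod hdcn hz₂
  calc δ ^ M / Fintype.card S * (δ ^ n * δ ^ n) * weight P π b c x
      ≤ π a (z a) * ((∏ k ∈ Finset.Ico a b, P k (z k) (z (k + 1))) *
          ∏ k ∈ Finset.Ico c d, P k (z k) (z (k + 1))) *
          (1 * ∏ k ∈ Finset.Ico b c, P k (z k) (z (k + 1))) := by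
        rw [weight, hmid]
        have hleft₀ := (pow_nonneg hδ.le n).trans hleft
        have hright₀ := (pow_nonneg hδ.le n).trans hright
        have ha₀ := hμ.dist_nonneg a (z a)
        have hb₀ := hμ.dist_nonneg b (x b)
        gcongr
        · exact h.le_dist hμ a (z a)
        · exact hμ.dist_le_one b (x b)
    _ = weight P π a d z := by
        rw [weight, ← prod_Ico_int_mul_prod_Ico _ (hab.trans hbc) hcd,
          ← prod_Ico_int_mul_prod_Ico _ hab hbc]
        ring

lemma ofReal_mul_measure_cyl_le [MeasurableSingletonClass S] (h : IsUniformlyMixing A P M δ)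
    (hμ : IsMarkovMeasure μ A P π) {i j a b : ℤ} {m L : ℕ} (hmL : m ≤ L) (hab : a ≤ b)
    (hia : i + m + M ≤ a) (hbj : b + M ≤ j) {u : Seq S}
    (hu : ∀ k ∈ edges (wordPair i j m), A (u k) (u (k + 1)) = true) (x : Seq S) :
    ENNReal.ofReal (δ ^ M / Fintype.card S * (δ ^ (L + M) * δ ^ (L + M))) *
      μ (cyl (Set.Icc a b) x) ≤ μ (cyl (Set.Icc a b) x ∩ cyl (wordPair i j m) u) := by
  have hδ := h.pos
  have hI : MeasurableSet (cyl (wordPair i j m : Set ℤ) u) :=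
    measurableSet_cyl (Set.to_countable _) u
  rw [← Measure.restrict_apply' hI, ← smul_eq_mul, ← Measure.smul_apply]
  refine measure_le_of_forall_cyl_le (Set.finite_Icc (i + m + M) (j - M))
    (fun y z hyz => ?_) fun y _ => ?_
  · have hyz' : Set.EqOn y z (Set.Icc a b) := fun k ⟨hak, hkb⟩ => hyz k ⟨by lia, by lia⟩
    exact propext ⟨fun hy => hyz'.symm.trans hy, fun hz => hyz'.trans hz⟩
  obtain ⟨z, hzy, hzu, hz₁, hz₂⟩ := h.exists_eqOn_wordPair (by lia) hu y
  have hsub : cyl (Set.Icc i (j + m)) z ⊆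
      cyl (Set.Icc (i + m + M) (j - M)) y ∩ cyl (wordPair i j m) u := fun w hw =>
    ⟨(hw.mono (Set.Icc_subset_Icc (by lia) (by lia))).trans hzy,
      (hw.mono fun k hk => by have := mem_wordPair.1 hk; exact ⟨by lia, by lia⟩).trans hzu⟩
  calc (ENNReal.ofReal (δ ^ M / Fintype.card S * (δ ^ (L + M) * δ ^ (L + M))) • μ)
        (cyl (Set.Icc (i + m + M) (j - M)) y)
      = ENNReal.ofReal (δ ^ M / Fintype.card S * (δ ^ (L + M) * δ ^ (L + M)) *
          weight P π (i + m + M) (j - M) y) := by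
        rw [Measure.smul_apply, smul_eq_mul, hμ.measure_cyl (by lia),
          ← ENNReal.ofReal_mul (by positivity)]
    _ ≤ ENNReal.ofReal (weight P π i (j + m) z) := ENNReal.ofReal_le_ofReal <|
        h.le_weight_of_eqOn hμ (by lia) (by lia) (by lia) (by lia) (by lia) hzy hz₁ hz₂
    _ = μ (cyl (Set.Icc i (j + m)) z) := (hμ.measure_cyl (by lia) z).symm
    _ ≤ μ.restrict (cyl (wordPair i j m) u) (cyl (Set.Icc (i + m + M) (j - M)) y) :=
        (measure_mono hsub).trans_eq (Measure.restrict_apply' hI).symm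

end IsUniformlyMixing

end Mixing

/-! ### Bounded orthogonal families -/

section Orthogonal

lemma tendsto_inner_cofinite_zero {𝕜 E ι : Type*} [RCLike 𝕜] [SeminormedAddCommGroup E]
    [InnerProductSpace 𝕜 E] {v : ι → E} {C : ℝ} (hC : ∀ i, ‖v i‖ ≤ C)
    (hv : Pairwise fun i j => inner 𝕜 (v i) (v j) = 0) (x : E) :
    Tendsto (fun i => inner 𝕜 (v i) x) cofinite (𝓝 0) := by
  let e : {i // ‖v i‖ ≠ 0} → E := fun i => ((‖v i‖⁻¹ : ℝ) : 𝕜) • v i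
  have he : Orthonormal 𝕜 e := by
    refine ⟨fun i => ?_, fun i j hij => ?_⟩
    · rw [norm_smul, RCLike.norm_ofReal, abs_of_nonneg (inv_nonneg.2 (norm_nonneg _)),
        inv_mul_cancel₀ i.2]
    · change inner 𝕜 (e i) (e j) = 0
      rw [inner_smul_left, inner_smul_right, hv (Subtype.coe_ne_coe.2 hij), mul_zero, mul_zero]
  have hsum : Summable fun i => ‖inner 𝕜 (v i) x‖ ^ 2 := by
    have hsub : Summable ((fun i => ‖inner 𝕜 (v i) x‖ ^ 2) ∘ Subtype.val :
        {i // ‖v i‖ ≠ 0} → ℝ) := by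
      refine ((he.inner_products_summable x).mul_left (C ^ 2)).of_nonneg_of_le
        (fun i => sq_nonneg _) fun i => ?_
      have hi : ‖inner 𝕜 (v i) x‖ = ‖v i‖ * ‖inner 𝕜 (e i) x‖ := by
        rw [inner_smul_left, norm_mul, RCLike.norm_conj, RCLike.norm_ofReal,
          abs_of_nonneg (inv_nonneg.2 (norm_nonneg _)), mul_inv_cancel_left₀ i.2]
      rw [Function.comp_apply, hi, mul_pow]
      gcongr
      exact hC i
    refine (summable_subtype_iff_indicator.1 hsub).congr fun i => Set.indicator_apply_eq_self.2
      fun hi => ?_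
    have hle := norm_inner_le_norm (𝕜 := 𝕜) (v i) x
    rw [not_not.1 hi, zero_mul] at hle
    rw [hle.antisymm (norm_nonneg _), sq, zero_mul]
  refine tendsto_zero_iff_norm_tendsto_zero.2 ?_
  simpa only [Real.sqrt_sq (norm_nonneg _), Real.sqrt_zero] using
    hsum.tendsto_cofinite_zero.sqrt

variable {Ω ι : Type*} [MeasurableSpace Ω] {μ : Measure Ω} [IsFiniteMeasure μ] {Y : ι → Ω → ℝ}
  {C : ℝ}

lemma tendsto_integral_mul_cofinite_zero_of_memLp (hm : ∀ i, AEStronglyMeasurable (Y i) μ)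
    (hC : ∀ i x, ‖Y i x‖ ≤ C) (hY : Pairwise fun i j => ∫ x, Y i x * Y j x ∂μ = 0) {f : Ω → ℝ}
    (hf : MemLp f 2 μ) : Tendsto (fun i => ∫ x, f x * Y i x ∂μ) cofinite (𝓝 0) := by
  have hYp (i : ι) : MemLp (Y i) 2 μ := .of_bound (hm i) C (.of_forall (hC i))
  have hinner {g h : Ω → ℝ} (hg : MemLp g 2 μ) (hh : MemLp h 2 μ) :
      inner ℝ (hg.toLp g) (hh.toLp h) = ∫ x, h x * g x ∂μ := by
    rw [L2.inner_def]
    refine integral_congr_ae ?_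
    filter_upwards [hg.coeFn_toLp, hh.coeFn_toLp] with x hgx hhx
    rw [hgx, hhx, RCLike.inner_apply, conj_trivial]
  refine (tendsto_inner_cofinite_zero (𝕜 := ℝ) (v := fun i => (hYp i).toLp (Y i))
    (fun i => Lp.norm_le_of_ae_bound (C := |C|) (abs_nonneg C) ?_) (fun i j hij => ?_)
    (hf.toLp f)).congr fun i => hinner _ _
  · filter_upwards [(hYp i).coeFn_toLp] with x hx
    rw [hx]
    exact (hC i x).trans (le_abs_self C)
  · exact (hinner _ _).trans (hY hij.symm)

lemma tendsto_integral_mul_cofinite_zero (hm : ∀ i, AEStronglyMeasurable (Y i) μ)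
    (hC : ∀ i x, ‖Y i x‖ ≤ C) (hY : Pairwise fun i j => ∫ x, Y i x * Y j x ∂μ = 0) {f : Ω → ℝ}
    (hf : Integrable f μ) : Tendsto (fun i => ∫ x, f x * Y i x ∂μ) cofinite (𝓝 0) := by
  refine Metric.tendsto_nhds.2 fun ε hε => ?_
  have hη : 0 < ε / 2 / (|C| + 1) := by positivity
  obtain ⟨g, hfg, hg⟩ := (memLp_one_iff_integrable.2 hf).exists_simpleFunc_eLpNorm_sub_lt
    ENNReal.one_ne_top (ENNReal.ofReal_pos.2 hη).ne'
  have hgi := memLp_one_iff_integrable.1 hg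
  have hnorm : ∫ x, ‖(f - g) x‖ ∂μ < ε / 2 / (|C| + 1) := by
    rw [integral_norm_eq_lintegral_enorm (hf.sub hgi).aestronglyMeasurable]
    rw [eLpNorm_one_eq_lintegral_enorm] at hfg
    exact (ENNReal.lt_ofReal_iff_toReal_lt hfg.ne_top).1 hfg
  have hint {h : Ω → ℝ} (hh : Integrable h μ) (i : ι) : Integrable (fun x => h x * Y i x) μ :=
    hh.mul_bdd (hm i) (.of_forall (hC i))
  have hlim := tendsto_integral_mul_cofinite_zero_of_memLp hm hC hY
    (g.memLp_of_isFiniteMeasure 2 μ)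
  filter_upwards [Metric.tendsto_nhds.1 hlim (ε / 2) (half_pos hε)] with i hi
  have hdiff : ‖∫ x, f x * Y i x ∂μ - ∫ x, g x * Y i x ∂μ‖ < ε / 2 := calc
    _ = ‖∫ x, (f x - g x) * Y i x ∂μ‖ := by
        rw [← integral_sub (hint hf i) (hint hgi i)]
        simp only [sub_mul]
    _ ≤ ∫ x, ‖f x - g x‖ * (|C| + 1) ∂μ := by
        refine norm_integral_le_of_norm_le ((hf.sub hgi).norm.mul_const _) (.of_forall fun x => ?_)
        rw [norm_mul]
        gcongr
        exact ((hC i x).trans (le_abs_self C)).trans (lt_add_one _).le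
    _ < ε / 2 := by
        rw [integral_mul_const]
        exact (lt_div_iff₀ (by positivity)).1 hnorm
  rw [dist_zero_right] at hi ⊢
  calc ‖∫ x, f x * Y i x ∂μ‖
      ≤ ‖∫ x, f x * Y i x ∂μ - ∫ x, g x * Y i x ∂μ‖ + ‖∫ x, g x * Y i x ∂μ‖ :=
        norm_le_norm_sub_add _ _
    _ < ε := by linarith

lemma tendsto_integral_cofinite_zero_of_absolutelyContinuous
    (hm : ∀ i, AEStronglyMeasurable (Y i) μ) (hC : ∀ i x, ‖Y i x‖ ≤ C)
    (hY : Pairwise fun i j => ∫ x, Y i x * Y j x ∂μ = 0) {ν : Measure Ω} [IsFiniteMeasure ν]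
    (hν : ν ≪ μ) : Tendsto (fun i => ∫ x, Y i x ∂ν) cofinite (𝓝 0) :=
  (tendsto_integral_mul_cofinite_zero hm hC hY Measure.integrable_toReal_rnDeriv).congr fun _ =>
    integral_rnDeriv_smul hν

end Orthogonal

/-! ### Asymptotic shift invariance of the transition matrices -/

section Drift

variable {S : Type*}

lemma weight_update_succ (P : ℤ → S → S → ℝ) (π : ℤ → S → ℝ) {a n : ℤ} (han : a ≤ n) (x : Seq S)
    (t : S) : weight P π a (n + 1) (Function.update x (n + 1) t) =
      P n (x n) t * weight P π a n x := by
  have hx {k : ℤ} (hk : k ≤ n) : Function.update x (n + 1) t k = x k :=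
    Function.update_of_ne (by lia) t x
  have hprod : ∏ k ∈ Finset.Ico a n, P k (Function.update x (n + 1) t k)
      (Function.update x (n + 1) t (k + 1)) = ∏ k ∈ Finset.Ico a n, P k (x k) (x (k + 1)) :=
    Finset.prod_congr rfl fun k hk => by
      have := Finset.mem_Ico.1 hk
      rw [hx (by lia), hx (by lia)]
  have hsingle : Finset.Ico n (n + 1) = {n} := by
    ext k
    rw [Finset.mem_Ico, Finset.mem_singleton]
    lia
  rw [weight, weight, hx han, ← prod_Ico_int_mul_prod_Ico _ han (Int.le_add_one le_rfl), hprod,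
    hsingle, Finset.prod_singleton, hx le_rfl, Function.update_self]
  ring

lemma cyl_Icc_inter_succ {a n : ℤ} (han : a ≤ n) (x : Seq S) (t : S) :
    cyl (Set.Icc a n) x ∩ {y | y (n + 1) = t} =
      cyl (Set.Icc a (n + 1)) (Function.update x (n + 1) t) := by
  ext y
  constructor
  · rintro ⟨hyx, hyt⟩ k ⟨hak, hkn⟩
    obtain rfl | hk := eq_or_ne k (n + 1)
    · rw [Function.update_self, hyt]
    · rw [Function.update_of_ne hk, hyx ⟨hak, by lia⟩]
  · refine fun hy => ⟨fun k ⟨hak, hkn⟩ => ?_, ?_⟩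
    · rw [hy ⟨hak, by lia⟩, Function.update_of_ne (by lia)]
    · exact (hy ⟨by lia, le_rfl⟩).trans (Function.update_self ..)

/-- The indicator of the transition `s → t` at time `n` minus its conditional expectation given the
past of a Markov measure with transition matrices `P`. -/
noncomputable def compensatedTransition (P : ℤ → S → S → ℝ) (s t : S) (n : ℤ) (x : Seq S) : ℝ :=
  {x : Seq S | x n = s ∧ x (n + 1) = t}.indicator 1 x -
    P n s t * {x : Seq S | x n = s}.indicator 1 x

lemma norm_compensatedTransition_le [Fintype S] {P : ℤ → S → S → ℝ} (hP : ∀ n, IsStochastic (P n))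
    (s t : S) (n : ℤ) (x : Seq S) : ‖compensatedTransition P s t n x‖ ≤ 1 := by
  have h₀ := (hP n).1 s t
  have h₁ : P n s t ≤ 1 := (hP n).2 s ▸
    Finset.single_le_sum (fun t _ => (hP n).1 s t) (Finset.mem_univ t)
  rw [Real.norm_eq_abs, abs_le, compensatedTransition]
  by_cases hs : x n = s <;> by_cases ht : x (n + 1) = t <;>
    simp only [Set.indicator, Set.mem_ofPred_eq, hs, ht, and_true, and_false, if_true, if_false,
      Pi.one_apply] <;> constructor <;> linarith

variable [MeasurableSpace S] {A : S → S → Bool} {P : ℤ → S → S → ℝ} {π : ℤ → S → ℝ}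
  {μ : Measure (Seq S)}

lemma IsMarkovMeasure.measureReal_eval_eq [Fintype S] (hμ : IsMarkovMeasure μ A P π) (n : ℤ)
    (s : S) : μ.real {x | x n = s} = π n s := by
  have hset : {x : Seq S | x n = s} = cyl (Set.Icc n n) fun _ => s := by
    rw [Set.Icc_self]
    exact Set.ext fun x => (Set.eqOn_singleton (f₂ := fun _ => s)).symm
  rw [hset, measureReal_def, hμ.measure_cyl le_rfl, weight, Finset.Ico_self, Finset.prod_empty,
    mul_one, ENNReal.toReal_ofReal (hμ.dist_nonneg n s)]

variable [MeasurableSingletonClass S]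

lemma measurableSet_eval_eq (n : ℤ) (s : S) : MeasurableSet {x : Seq S | x n = s} :=
  (measurable_pi_apply n : Measurable fun x : Seq S => x n) <| measurableSet_singleton s

lemma measurableSet_transition (n : ℤ) (s t : S) :
    MeasurableSet {x : Seq S | x n = s ∧ x (n + 1) = t} :=
  (measurableSet_eval_eq n s).inter (measurableSet_eval_eq (n + 1) t)

lemma measurable_compensatedTransition (P : ℤ → S → S → ℝ) (s t : S) (n : ℤ) :
    Measurable (compensatedTransition P s t n) :=
  (measurable_one.indicator (measurableSet_transition n s t)).sub
    ((measurable_one.indicator (measurableSet_eval_eq n s)).const_mul _)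

lemma setIntegral_compensatedTransition (μ : Measure (Seq S)) [IsFiniteMeasure μ]
    (P : ℤ → S → S → ℝ) (s t : S) (n : ℤ) {E : Set (Seq S)} (hE : MeasurableSet E) :
    ∫ x in E, compensatedTransition P s t n x ∂μ =
      μ.real (E ∩ {x | x n = s ∧ x (n + 1) = t}) - P n s t * μ.real (E ∩ {x | x n = s}) := by
  have hint {F : Set (Seq S)} (hF : MeasurableSet F) :
      Integrable (F.indicator (1 : Seq S → ℝ)) (μ.restrict E) :=
    (integrable_const (1 : ℝ)).indicator hF
  have h₁ := measurableSet_transition n s t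
  have h₂ := measurableSet_eval_eq n s
  simp only [compensatedTransition]
  rw [integral_sub (hint h₁) ((hint h₂).const_mul _), integral_const_mul,
    integral_indicator_one h₁, integral_indicator_one h₂, measureReal_restrict_apply' hE,
    measureReal_restrict_apply' hE, Set.inter_comm E, Set.inter_comm E]

variable [Fintype S]

namespace IsMarkovMeasure

lemma measureReal_inter_transition (hμ : IsMarkovMeasure μ A P π) {a n : ℤ} (han : a ≤ n)
    {E : Set (Seq S)} (hE : DependsOn (· ∈ E) (Set.Icc a n)) (s t : S) :
    μ.real (E ∩ {x | x n = s ∧ x (n + 1) = t}) = P n s t * μ.real (E ∩ {x | x n = s}) := by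
  have hnext := measurableSet_eval_eq (n + 1) t
  have hdep : DependsOn (· ∈ E ∩ {x | x n = s}) (Set.Icc a n) := fun x y hxy => by
    have hEx : x ∈ E ↔ y ∈ E := iff_of_eq (hE hxy)
    simp only [Set.mem_inter_iff, Set.mem_ofPred_eq, hEx, hxy n ⟨han, le_rfl⟩]
  have hcyl : ∀ x ∈ E ∩ {x | x n = s}, μ.restrict {x | x (n + 1) = t} (cyl (Set.Icc a n) x) =
      (ENNReal.ofReal (P n s t) • μ) (cyl (Set.Icc a n) x) := by
    rintro x ⟨-, rfl⟩
    rw [Measure.restrict_apply' hnext, cyl_Icc_inter_succ han, hμ.measure_cyl (by lia),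
      weight_update_succ P π han, ENNReal.ofReal_mul ((hμ.stochastic n).1 _ _),
      ← hμ.measure_cyl han, Measure.smul_apply, smul_eq_mul]
  have heq := le_antisymm
    (measure_le_of_forall_cyl_le (Set.finite_Icc a n) hdep fun x hx => (hcyl x hx).le)
    (measure_le_of_forall_cyl_le (Set.finite_Icc a n) hdep fun x hx => (hcyl x hx).ge)
  rw [Measure.restrict_apply' hnext, Measure.smul_apply, smul_eq_mul, Set.inter_assoc] at heq
  rw [measureReal_def, measureReal_def, Set.ofPred_and, heq, ENNReal.toReal_mul,
    ENNReal.toReal_ofReal ((hμ.stochastic n).1 _ _)]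

lemma setIntegral_compensatedTransition_eq_zero (hμ : IsMarkovMeasure μ A P π) {a n : ℤ}
    (han : a ≤ n) {E : Set (Seq S)} (hE : DependsOn (· ∈ E) (Set.Icc a n))
    (hEm : MeasurableSet E) (s t : S) : ∫ x in E, compensatedTransition P s t n x ∂μ = 0 := by
  have := hμ.isProb
  rw [setIntegral_compensatedTransition μ P s t n hEm, hμ.measureReal_inter_transition han hE,
    sub_self]

lemma integral_compensatedTransition_mul (hμ : IsMarkovMeasure μ A P π) (s t : S) :
    Pairwise fun m n : ℤ =>
      ∫ x, compensatedTransition P s t m x * compensatedTransition P s t n x ∂μ = 0 := by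
  have := hμ.isProb
  intro m n hmn
  wlog h : m < n generalizing m n
  · simpa only [mul_comm] using this hmn.symm (by lia)
  have hint {E : Set (Seq S)} (hE : MeasurableSet E) :
      Integrable (E.indicator (compensatedTransition P s t n)) μ :=
    (Integrable.of_bound (measurable_compensatedTransition P s t n).aestronglyMeasurable 1
      (.of_forall (norm_compensatedTransition_le hμ.stochastic s t n))).indicator hE
  have hmul (x : Seq S) : compensatedTransition P s t m x * compensatedTransition P s t n x =
      {x : Seq S | x m = s ∧ x (m + 1) = t}.indicator (compensatedTransition P s t n) x -
        P m s t * {x : Seq S | x m = s}.indicator (compensatedTransition P s t n) x := by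
    rw [compensatedTransition, sub_mul, mul_assoc, ← Set.indicator_mul_left,
      ← Set.indicator_mul_left]
    simp only [Pi.one_apply, one_mul]
  have h₁ := measurableSet_transition m s t
  have h₂ := measurableSet_eval_eq m s
  have hdep₂ : DependsOn (· ∈ {x : Seq S | x m = s}) (Set.Icc m n) := fun x y hxy =>
    congrArg (· = s) (hxy m ⟨le_rfl, h.le⟩)
  have hdep₁ : DependsOn (· ∈ {x : Seq S | x m = s ∧ x (m + 1) = t}) (Set.Icc m n) :=
    fun x y hxy => congrArg₂ And (hdep₂ hxy) (congrArg (· = t) (hxy (m + 1) ⟨by lia, by lia⟩))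
  simp only [hmul]
  rw [integral_sub (hint h₁) ((hint h₂).const_mul _), integral_const_mul, integral_indicator h₁,
    integral_indicator h₂, hμ.setIntegral_compensatedTransition_eq_zero h.le hdep₁ h₁,
    hμ.setIntegral_compensatedTransition_eq_zero h.le hdep₂ h₂, mul_zero, sub_zero]

lemma integral_compensatedTransition_map_shiftZ (hμ : IsMarkovMeasure μ A P π) (s t : S)
    (m n : ℤ) : ∫ x, compensatedTransition P s t n x ∂μ.map (shiftZ m) =
      π (n + m) s * (P (n + m) s t - P n s t) := by
  have hshift := hμ.shift m
  have := hshift.isProb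
  rw [← setIntegral_univ, setIntegral_compensatedTransition _ P s t n .univ,
    hshift.measureReal_inter_transition le_rfl (fun _ _ _ => rfl), Set.univ_inter,
    hshift.measureReal_eval_eq]
  ring

end IsMarkovMeasure

variable {M : ℕ} {δ : ℝ}

namespace IsUniformlyMixing

/-- The means of the compensated transitions under a shift of `μ` measure the change of the
transition probabilities, and they vanish asymptotically since the compensated transitions are
orthogonal in `L²(μ)`. -/
lemma tendsto_sub_cofinite_zero (h : IsUniformlyMixing A P M δ) (hμ : IsMarkovMeasure μ A P π)
    (hns : ShiftNonsingular μ) (s t : S) (m : ℤ) :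
    Tendsto (fun n : ℤ => P (n + m) s t - P n s t) cofinite (𝓝 0) := by
  have := hμ.isProb
  have := (hμ.shift m).isProb
  have : Nonempty S := ⟨s⟩
  have hδ : 0 < δ ^ M / Fintype.card S :=
    div_pos (pow_pos h.pos M) (Nat.cast_pos.2 Fintype.card_pos)
  have hmean := tendsto_integral_cofinite_zero_of_absolutelyContinuous
    (fun n => (measurable_compensatedTransition P s t n).aestronglyMeasurable)
    (norm_compensatedTransition_le hμ.stochastic s t) (hμ.integral_compensatedTransition_mul s t)
    (hns.map_shiftZ m).1
  simp only [hμ.integral_compensatedTransition_map_shiftZ] at hmean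
  have hbound := hmean.norm.const_mul (δ ^ M / Fintype.card S)⁻¹
  rw [norm_zero, mul_zero] at hbound
  refine squeeze_zero_norm (fun n => ?_) hbound
  rw [norm_mul, Real.norm_of_nonneg (hμ.dist_nonneg _ s), ← mul_assoc, inv_mul_eq_div]
  exact le_mul_of_one_le_left (norm_nonneg _) ((one_le_div hδ).2 (h.le_dist hμ (n + m) s))

lemma tendsto_log_sub_cofinite_zero (h : IsUniformlyMixing A P M δ) (hμ : IsMarkovMeasure μ A P π)
    (hns : ShiftNonsingular μ) {s t : S} (hst : A s t = true) (i j : ℤ) :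
    Tendsto (fun n : ℤ => Real.log (P (i + n) s t) - Real.log (P (j + n) s t))
      cofinite (𝓝 0) := by
  have hpos (n : ℤ) : 0 < P n s t := h.pos.trans_le (h.le_of_adm n s t hst)
  have hratio : Tendsto (fun n : ℤ => P (n + (i - j)) s t / P n s t) cofinite (𝓝 1) := by
    have hbound := (h.tendsto_sub_cofinite_zero hμ hns s t (i - j)).norm.const_mul δ⁻¹
    rw [norm_zero, mul_zero] at hbound
    refine tendsto_sub_nhds_zero_iff.1 (squeeze_zero_norm (fun n => ?_) hbound)
    rw [div_sub_one (hpos n).ne', norm_div, Real.norm_of_nonneg (hpos n).le, div_eq_inv_mul]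
    exact mul_le_mul_of_nonneg_right (inv_anti₀ h.pos (h.le_of_adm n s t hst)) (norm_nonneg _)
  have hlog := (hratio.log one_ne_zero).comp (add_right_injective j).tendsto_cofinite
  rw [Real.log_one] at hlog
  refine hlog.congr fun n => ?_
  have hshift : j + n + (i - j) = i + n := by ring
  rw [Function.comp_apply, hshift, Real.log_div (hpos _).ne' (hpos _).ne']

end IsUniformlyMixing

end Drift

/-! ### Admissible configurations -/

section Configurations

variable {S : Type*}

/-- `B` and `B'` are admissible words of `m + 1` letters with the same first and the same last
letter. Unlike in an admissible pair, `B = B'` is allowed. -/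
structure IsAdmissiblePair (A : S → S → Bool) (m : ℕ) (B B' : ℕ → S) : Prop where
  adm_left : ∀ l < m, A (B l) (B (l + 1)) = true
  adm_right : ∀ l < m, A (B' l) (B' (l + 1)) = true
  first : B 0 = B' 0
  last : B m = B' m

lemma IsAdmissiblePair.symm {A : S → S → Bool} {m : ℕ} {B B' : ℕ → S}
    (h : IsAdmissiblePair A m B B') : IsAdmissiblePair A m B' B :=
  ⟨h.adm_right, h.adm_left, h.first.symm, h.last.symm⟩

/-- A sequence which reads `B` on the `m + 1` coordinates from `i` on, and `B'` from `j` on when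
`i + m < j`. -/
def placeWords (i j : ℤ) (m : ℕ) (B B' : ℕ → S) : Seq S := fun k =>
  if k ≤ i + m then B (k - i).toNat else B' (k - j).toNat

variable {A : S → S → Bool} {P : ℤ → S → S → ℝ} {π : ℤ → S → ℝ} {i j : ℤ} {l m : ℕ}
  {B B' : ℕ → S}

lemma placeWords_left (hl : l ≤ m) : placeWords i j m B B' (i + l) = B l := by
  rw [placeWords, if_pos (by lia), add_sub_cancel_left, Int.toNat_natCast]

lemma placeWords_right (hij : i + m < j) : placeWords i j m B B' (j + l) = B' l := by
  rw [placeWords, if_neg (by lia), add_sub_cancel_left, Int.toNat_natCast]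

lemma edges_wordPair (hij : i + m + 1 < j) :
    edges (wordPair i j m) = Finset.Ico i (i + m) ∪ Finset.Ico j (j + m) := by
  ext k
  simp only [mem_edges, mem_wordPair, Finset.mem_union, Finset.mem_Ico]
  lia

lemma sum_edges_wordPair (hij : i + m + 1 < j) (f : ℤ → S → S → ℝ) :
    ∑ k ∈ edges (wordPair i j m),
      f k (placeWords i j m B B' k) (placeWords i j m B B' (k + 1)) =
      ∑ l ∈ Finset.range m, (f (i + l) (B l) (B (l + 1)) + f (j + l) (B' l) (B' (l + 1))) := by
  have hdisj : Disjoint (Finset.Ico i (i + m)) (Finset.Ico j (j + m)) :=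
    Finset.disjoint_left.2 fun k hk hk' => by rw [Finset.mem_Ico] at hk hk'; lia
  rw [edges_wordPair hij, Finset.sum_union hdisj, sum_Ico_int_add, sum_Ico_int_add,
    ← Finset.sum_add_distrib]
  refine Finset.sum_congr rfl fun l hl => ?_
  have := Finset.mem_range.1 hl
  rw [add_assoc i, add_assoc j, ← Nat.cast_succ, placeWords_left (by lia),
    placeWords_left (by lia), placeWords_right (by lia), placeWords_right (by lia)]

lemma exchangeLog_placeWords (P : ℤ → S → S → ℝ) (hij : i + m + 1 < j) (B B' : ℕ → S) :
    exchangeLog P (wordPair i j m) (placeWords i j m B B') (placeWords i j m B' B) =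
      ∑ l ∈ Finset.range m,
        ((Real.log (P (i + l) (B' l) (B' (l + 1))) - Real.log (P (j + l) (B' l) (B' (l + 1)))) -
          (Real.log (P (i + l) (B l) (B (l + 1))) - Real.log (P (j + l) (B l) (B (l + 1))))) := by
  rw [exchangeLog, Finset.sum_sub_distrib, sum_edges_wordPair hij fun k s t => Real.log (P k s t),
    sum_edges_wordPair hij fun k s t => Real.log (P k s t), ← Finset.sum_sub_distrib]
  exact Finset.sum_congr rfl fun l _ => by ring

lemma wordP_pos (hP : ∀ n s t, A s t = true → 0 < P n s t)
    (hB : ∀ l < m, A (B l) (B (l + 1)) = true) (i : ℤ) : 0 < wordP P i B (m + 1) :=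
  Finset.prod_pos fun l hl => hP _ _ _ (hB l (Finset.mem_range.1 hl))

lemma log_wordP (hP : ∀ n s t, A s t = true → 0 < P n s t)
    (hB : ∀ l < m, A (B l) (B (l + 1)) = true) (i : ℤ) : Real.log (wordP P i B (m + 1)) =
      ∑ l ∈ Finset.range m, Real.log (P (i + l) (B l) (B (l + 1))) :=
  Real.log_prod fun l hl => (hP _ _ _ (hB l (Finset.mem_range.1 hl))).ne'

namespace IsAdmissiblePair

lemma exchangeLog_eq_log_wordP (h : IsAdmissiblePair A m B B')
    (hP : ∀ n s t, A s t = true → 0 < P n s t) (hij : i + m + 1 < j) :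
    exchangeLog P (wordPair i j m) (placeWords i j m B B') (placeWords i j m B' B) =
      Real.log (wordP P i B' (m + 1) * wordP P j B (m + 1) /
        (wordP P i B (m + 1) * wordP P j B' (m + 1))) := by
  have hB (k : ℤ) := (wordP_pos hP h.adm_left k).ne'
  have hB' (k : ℤ) := (wordP_pos hP h.adm_right k).ne'
  rw [Real.log_div (mul_ne_zero (hB' i) (hB j)) (mul_ne_zero (hB i) (hB' j)),
    Real.log_mul (hB' i) (hB j), Real.log_mul (hB i) (hB' j), log_wordP hP h.adm_left,
    log_wordP hP h.adm_left, log_wordP hP h.adm_right, log_wordP hP h.adm_right,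
    exchangeLog_placeWords P hij]
  simp only [Finset.sum_sub_distrib]
  ring

lemma adm_placeWords (h : IsAdmissiblePair A m B B') (hij : i + m + 1 < j) :
    ∀ k ∈ edges (wordPair i j m),
      A (placeWords i j m B B' k) (placeWords i j m B B' (k + 1)) = true := by
  intro k hk
  rw [edges_wordPair hij, Finset.mem_union, Finset.mem_Ico, Finset.mem_Ico] at hk
  obtain ⟨hik, hkm⟩ | ⟨hjk, hkm⟩ := hk
  · obtain ⟨l, rfl⟩ := Int.le.dest hik
    rw [add_assoc, ← Nat.cast_succ, placeWords_left (by lia), placeWords_left (by lia)]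
    exact h.adm_left l (by lia)
  · obtain ⟨l, rfl⟩ := Int.le.dest hjk
    rw [add_assoc, ← Nat.cast_succ, placeWords_right (by lia), placeWords_right (by lia)]
    exact h.adm_right l (by lia)

lemma pos_and_lt_of_ne (h : IsAdmissiblePair A m B B') (hlm : l ≤ m) (hl : B l ≠ B' l) :
    0 < l ∧ l < m :=
  ⟨Nat.pos_of_ne_zero fun h₀ => hl (h₀ ▸ h.first), hlm.lt_of_ne fun hm => hl (hm ▸ h.last)⟩

lemma mem_wordPair_of_ne (h : IsAdmissiblePair A m B B') (hij : i + m + 1 < j) {k : ℤ}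
    (hk : k ∈ wordPair i j m) (hne : placeWords i j m B B' k ≠ placeWords i j m B' B k) :
    k - 1 ∈ wordPair i j m ∧ k + 1 ∈ wordPair i j m := by
  obtain ⟨hik, hkm⟩ | ⟨hjk, hkm⟩ := mem_wordPair.1 hk
  · obtain ⟨l, rfl⟩ := Int.le.dest hik
    rw [placeWords_left (by lia), placeWords_left (by lia)] at hne
    have := h.pos_and_lt_of_ne (by lia) hne
    constructor <;> rw [mem_wordPair] <;> lia
  · obtain ⟨l, rfl⟩ := Int.le.dest hjk
    rw [placeWords_right (by lia), placeWords_right (by lia)] at hne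
    have := h.pos_and_lt_of_ne (by lia) hne.symm
    constructor <;> rw [mem_wordPair] <;> lia

lemma isExchange (h : IsAdmissiblePair A m B B') (hij : i + m + 1 < j) :
    IsExchange A (wordPair i j m) (placeWords i j m B B') (placeWords i j m B' B) where
  pred_mem _ hk hne := (h.mem_wordPair_of_ne hij hk hne).1
  succ_mem _ hk hne := (h.mem_wordPair_of_ne hij hk hne).2
  adm_left := h.adm_placeWords hij
  adm_right := h.symm.adm_placeWords hij

end IsAdmissiblePair

variable [Fintype S] [MeasurableSpace S] [MeasurableSingletonClass S] {μ : Measure (Seq S)} {M : ℕ}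
  {δ : ℝ}

lemma IsUniformlyMixing.tendsto_exchangeLog (h : IsUniformlyMixing A P M δ)
    (hμ : IsMarkovMeasure μ A P π) (hns : ShiftNonsingular μ) (hB : IsAdmissiblePair A m B B')
    (hij : i + m + 1 < j) : Tendsto (fun n : ℤ => exchangeLog (fun k => P (k + n)) (wordPair i j m)
      (placeWords i j m B B') (placeWords i j m B' B)) cofinite (𝓝 0) := by
  simp only [exchangeLog_placeWords _ hij]
  rw [← Finset.sum_const_zero (s := Finset.range m)]
  refine tendsto_finsetSum _ fun l hl => ?_
  have hl := Finset.mem_range.1 hl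
  rw [← sub_zero (0 : ℝ)]
  exact (h.tendsto_log_sub_cofinite_zero hμ hns (hB.adm_right l hl) _ _).sub
    (h.tendsto_log_sub_cofinite_zero hμ hns (hB.adm_left l hl) _ _)

lemma IsUniformlyMixing.isEssentialValueRenorm (h : IsUniformlyMixing A P M δ)
    (hμ : IsMarkovMeasure μ A P π) (hns : ShiftNonsingular μ) {L : ℕ} {r : ℝ}
    (hr : ∀ ε > 0, ∀ N : ℕ, ∃ (m : ℕ) (B B' : ℕ → S) (i j : ℤ), m ≤ L ∧
      IsAdmissiblePair A m B B' ∧ i + m + M < -N ∧ N + M < j ∧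
      |Real.log (wordP P i B' (m + 1) * wordP P j B (m + 1) /
        (wordP P i B (m + 1) * wordP P j B' (m + 1))) - r| < ε) :
    IsEssentialValueRenorm μ r := by
  have := hμ.isProb
  have hP : ∀ n s t, A s t = true → 0 < P n s t := fun n s t hst =>
    h.pos.trans_le (h.le_of_adm n s t hst)
  refine .of_forall_window fun ε hε => ⟨δ ^ M / Fintype.card S * (δ ^ (L + M) * δ ^ (L + M)), ?_,
    fun N => ?_⟩
  · have hδ := h.pos
    obtain ⟨_, B, _⟩ := hr ε hε 0
    have : Nonempty S := ⟨B 0⟩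
    positivity
  obtain ⟨m, B, B', i, j, hmL, hB, hi, hj, hlog⟩ := hr ε hε N
  have hij : i + m + 1 < j := by lia
  refine ⟨(hB.isExchange hij).renormPFG hμ hP hns (h.tendsto_exchangeLog hμ hns hB hij),
    fun x _ => ?_, fun x _ k hk => overwrite_of_notMem (fun hkI => ?_) _ x,
    h.ofReal_mul_measure_cyl_le hμ hmL (by lia) hi.le hj.le (hB.adm_placeWords hij)⟩
  · rwa [← hB.exchangeLog_eq_log_wordP hP hij] at hlog
  · have := mem_wordPair.1 hkI
    have := Set.mem_Icc.1 hk
    lia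

end Configurations

lemma Doeblin.exists_isUniformlyMixing {S : Type*} {A : S → S → Bool} {P : ℤ → S → S → ℝ}
    (hD : Doeblin A P) {M : ℕ} (hprim : ∀ s t : S, ∃ u : ℕ → S,
      u 0 = s ∧ u M = t ∧ ∀ i < M, A (u i) (u (i + 1)) = true) :
    ∃ δ, IsUniformlyMixing A P M δ := by
  obtain ⟨δ, hδ, hP⟩ := hD
  exact ⟨min δ 1, lt_min hδ one_pos, min_le_right δ 1,
    fun n s t hst => (min_le_left δ 1).trans ((hP n s t).2 hst), hprim⟩

lemma tendsto_atTop_of_le_sub {f : ℕ → ℤ} {c : ℤ} (hc : 0 < c)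
    (hf : ∀ k, c ≤ f (k + 1) - f k) : Tendsto f atTop atTop :=
  have hmono : StrictMono f := strictMono_nat_of_lt_succ fun k => by linarith [hf k]
  tendsto_atTop_atTop_of_monotone' hmono.monotone hmono.not_bddAbove_range_of_isSuccArchimedean

lemma tendsto_atBot_of_le_sub {f : ℕ → ℤ} {c : ℤ} (hc : 0 < c)
    (hf : ∀ k, c ≤ f k - f (k + 1)) : Tendsto f atTop atBot :=
  tendsto_neg_atTop_iff.1 (tendsto_atTop_of_le_sub hc fun k => by linarith [hf k])

theorem partial_limits_subset_ratioSet_renorm_general {S : Type*} [Fintype S] [MeasurableSpace S]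
    [MeasurableSingletonClass S] {A : S → S → Bool} {P : ℤ → S → S → ℝ} {π : ℤ → S → ℝ}
    {μ : Measure (Seq S)} (hμ : IsMarkovMeasure μ A P π) (hD : Doeblin A P)
    (hns : ShiftNonsingular μ) {M : ℕ}
    (hprim : ∀ s t : S, ∃ u : ℕ → S,
      u 0 = s ∧ u M = t ∧ ∀ i < M, A (u i) (u (i + 1)) = true)
    {L : ℕ} {B B' : ℕ → ℕ → S} {m : ℕ → ℕ} (hm : ∀ k, m k ≤ L)
    (hB : ∀ k, IsAdmissiblePair A (m k) (B k) (B' k))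
    {i j : ℕ → ℤ} (hi : Tendsto i atTop atBot) (hj : Tendsto j atTop atTop)
    {D : ℕ → ℝ} (hDdef : ∀ k, D k = Real.log
      (wordP P (i k) (B' k) (m k + 1) * wordP P (j k) (B k) (m k + 1) /
        (wordP P (i k) (B k) (m k + 1) * wordP P (j k) (B' k) (m k + 1)))) :
    (∀ r ∈ limitSet D, IsEssentialValueRenorm μ r) ∧
    (((∃ a b : ℝ, a < b ∧ Set.Icc a b ⊆ limitSet D) ∨
        (∃ r₁ r₂ : ℝ, r₁ ∈ limitSet D ∧ r₂ ∈ limitSet D ∧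
          LinearIndependent ℚ ![r₁, r₂])) →
      ∀ r : ℝ, IsEssentialValueRenorm μ r) := by
  have := hμ.isProb
  obtain ⟨δ, h⟩ := hD.exists_isUniformlyMixing hprim
  have hlimit : limitSet D ⊆ ratioSet hns := by
    rintro r ⟨φ, hφ, hr⟩
    refine h.isEssentialValueRenorm (L := L) hμ hns fun ε hε N => ?_
    have hki := (hi.comp hφ.tendsto_atTop).eventually_lt_atBot (-N - L - M)
    have hkj := (hj.comp hφ.tendsto_atTop).eventually_gt_atTop (N + M)
    obtain ⟨k, hik, hjk, hrk⟩ := (hki.and (hkj.and (Metric.tendsto_nhds.1 hr ε hε))).exists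
    have hmk := hm (φ k)
    rw [Function.comp_apply] at hik hjk hrk
    exact ⟨_, _, _, _, _, hmk, hB (φ k), by lia, hjk, hDdef (φ k) ▸ hrk⟩
  refine ⟨hlimit, fun hlarge => ?_⟩
  have htop : ratioSet hns = ⊤ := by
    obtain ⟨a, b, hab, hI⟩ | ⟨r₁, r₂, hr₁, hr₂, hind⟩ := hlarge
    · exact addSubgroup_real_eq_top_of_Icc_subset hab (hI.trans hlimit)
    · exact addSubgroup_real_eq_top_of_linearIndependent (isClosed_ratioSet hns) (hlimit hr₁)
        (hlimit hr₂) hind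
  exact (AddSubgroup.eq_top_iff' _).1 htop

/-- **Partial limits of admissible configurations are essential values.**
For a topologically mixing (with `A^M > 0`) Markov SFT with the Doeblin condition
and nonsingular shift, for every admissible configuration `(B_k(i_k), B'_k(j_k))`
with `D_k = log(P_{i_k}(B'_k) P_{j_k}(B_k) / (P_{i_k}(B_k) P_{j_k}(B'_k)))`, the
set `𝓛(D_k)` of partial limits of `(D_k)` is contained in the ratio set
`e(𝓡_A)`; in particular, if `𝓛(D_k)` contains an interval of positive length, or
two numbers linearly independent over `ℚ`, then `e(𝓡_A) = ℝ`. -/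
theorem partial_limits_subset_ratioSet_renorm
    {S : Type*} [Fintype S] [MeasurableSpace S] [MeasurableSingletonClass S]
    (A : S → S → Bool)
    (P : ℤ → S → S → ℝ) (π : ℤ → S → ℝ) (μ : Measure (Seq S))
    (hμ : IsMarkovMeasure μ A P π) (hD : Doeblin A P)
    (hns : ShiftNonsingular μ)
    (M : ℕ) (hM : 1 ≤ M)
    (hprim : ∀ s t : S, ∃ u : ℕ → S,
      u 0 = s ∧ u M = t ∧ ∀ i < M, A (u i) (u (i + 1)) = true)
    -- the admissible configuration
    (L : ℕ) (hL : 1 ≤ L)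
    (Bk B'k : ℕ → ℕ → S) (len : ℕ → ℕ)
    (hlen : ∀ k, 1 ≤ len k ∧ len k ≤ L)
    (hBadm : ∀ k, ∀ l : ℕ, l + 1 < len k → A (Bk k l) (Bk k (l + 1)) = true)
    (hB'adm : ∀ k, ∀ l : ℕ, l + 1 < len k → A (B'k k l) (B'k k (l + 1)) = true)
    (hfirst : ∀ k, Bk k 0 = B'k k 0)
    (hlast : ∀ k, Bk k (len k - 1) = B'k k (len k - 1))
    (hne : ∀ k, ∃ l < len k, Bk k l ≠ B'k k l)
    (jj : ℕ → ℤ) (hjpos : ∀ k, 1 ≤ jj k)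
    (hjgap : ∀ k, (L : ℤ) + (M : ℤ) ≤ jj (k + 1) - jj k)
    (ii : ℕ → ℤ) (hineg : ∀ k, ii k ≤ -1)
    (higap : ∀ k, (L : ℤ) + (M : ℤ) ≤ ii k - ii (k + 1))
    -- the sequence D
    (D : ℕ → ℝ)
    (hDdef : ∀ k, D k = Real.log
      (wordP P (ii k) (B'k k) (len k) * wordP P (jj k) (Bk k) (len k) /
        (wordP P (ii k) (Bk k) (len k) * wordP P (jj k) (B'k k) (len k)))) :
    (∀ r : ℝ, r ∈ limitSet D → IsEssentialValueRenorm μ r) ∧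
    (((∃ a b : ℝ, a < b ∧ Set.Icc a b ⊆ limitSet D) ∨
        (∃ r₁ r₂ : ℝ, r₁ ∈ limitSet D ∧ r₂ ∈ limitSet D ∧
          LinearIndependent ℚ ![r₁, r₂])) →
      ∀ r : ℝ, IsEssentialValueRenorm μ r) := by
  exact partial_limits_subset_ratioSet_renorm_general hμ hD hns hprim (m := fun k => len k - 1)
    (fun k => (Nat.sub_le _ _).trans (hlen k).2)
    (fun k => ⟨fun l hl => hBadm k l (by lia), fun l hl => hB'adm k l (by lia), hfirst k, hlast k⟩)
    (tendsto_atBot_of_le_sub (by lia) higap) (tendsto_atTop_of_le_sub (by lia) hjgap) hDdef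

end MarkovSFT
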